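/- Let F ⊆ ℝ be a non-empty bounded set with dim_H F > 0. Then dim_A (FF + F) ≥ min{2 · dim_A F, 1}, where FF + F = {xy + z : x, y, z ∈ F}. -/

import Mathlib

open Metric MeasureTheory Filter Set
open scoped ENNReal NNReal Pointwise Topology

noncomputable section

/-- The Assouad dimension of a subset of a (pseudo)metric space: the infimum of all
`α ≥ 0` for which there is `C > 0` such that for every `x ∈ E` and all scales `0 < r < R`,
the set `E ∩ B(x,R)` can be covered by at most `C (R/r)^α` sets of diameter at most `r`. -/
def assouadDim {X : Type*} [PseudoMetricSpace X] (E : Set X) : ℝ :=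
  sInf {α : ℝ | 0 ≤ α ∧ ∃ C : ℝ, 0 < C ∧ ∀ x ∈ E, ∀ r R : ℝ, 0 < r → r < R →
    ∃ 𝒰 : Finset (Set X), (E ∩ closedBall x R ⊆ ⋃ U ∈ 𝒰, U) ∧
      (∀ U ∈ 𝒰, EMetric.diam U ≤ ENNReal.ofReal r) ∧
      ((𝒰.card : ℝ) ≤ C * (R / r) ^ α)}

/-!
Suppose `E * F + F` is covered with an exponent `d < 1`; we bound `2 * assouadDim F` by `d`. Points
of `E * F + F` at distance at most a multiple of `δ` are linked into chains, and since `d < 1` a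
chain has length `O(δ)`: the chains form nested partitions with branching exponent `d`, which do not
separate neighbouring points. They discretise the projections `(x, y) ↦ e * x + y` of `F × F`.

Let two slopes be at distance between `2 ^ (-κ u)` and `2 ^ (-u)`. The digits of `(x, y)` up to
level `u` can be recovered block by block from the two projections observed up to level
`(1 + κ) u`, unless between the levels `u` and `(1 + κ) u` these projections gain information about
the dyadic square of level `u`. As `F × F` has almost `2 * assouadDim F * u` bits on suitable
pieces, more than the `d * u` bits of one projection, the entropy of the projections, compared with
that of the piece and averaged over the slopes, must grow by a definite rate `ε` between the scales
`u` and `(1 + κ) u`. Since `E` has positive Hausdorff dimension it contains a binary tree of slopes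
separated at arbitrarily many such scales; iterating along them makes the rate exceed its trivial
upper bound.
-/

section Entropy

variable {Ω α β γ : Type*}

open Classical in
/-- The number of points of `s` in the fibre of `g` through `x`, as a real number. -/
def fiberCard (s : Finset Ω) (g : Ω → α) (x : Ω) : ℝ := ({y ∈ s | g y = g x} : Finset Ω).card

/-- The Shannon entropy of `g` under the uniform measure on `s`, multiplied by `s.card`: leaving
out the normalisation makes conditional entropies additive over a partition of `s`. -/
def entropy (s : Finset Ω) (g : Ω → α) : ℝ :=
  ∑ x ∈ s, (Real.log s.card - Real.log (fiberCard s g x))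

/-- The conditional entropy of `f` given `A`, with the same normalisation as `entropy`. -/
def condEntropy (s : Finset Ω) (f : Ω → α) (A : Ω → β) : ℝ :=
  entropy s (fun x => (f x, A x)) - entropy s A

/-- The mutual information of `f` and `g`, with the same normalisation as `entropy`. -/
def mutualInfo (s : Finset Ω) (f : Ω → α) (g : Ω → β) : ℝ :=
  entropy s f + entropy s g - entropy s (fun x => (f x, g x))

/-- The conditional mutual information of `f` and `g` given `A`, with the same normalisation as
`entropy`. -/
def condMutualInfo (s : Finset Ω) (f : Ω → α) (g : Ω → β) (A : Ω → γ) : ℝ :=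
  condEntropy s f A + condEntropy s g A - condEntropy s (fun x => (f x, g x)) A

/-- On `s`, the value of `g` is a function of the value of `f`. -/
def Determines (s : Finset Ω) (f : Ω → α) (g : Ω → β) : Prop :=
  ∀ p ∈ s, ∀ q ∈ s, f p = f q → g p = g q

theorem fiberCard_pos {s : Finset Ω} (g : Ω → α) {x : Ω} (hx : x ∈ s) : 0 < fiberCard s g x := by
  classical
  exact Nat.cast_pos.2 (Finset.card_pos.2 ⟨x, by simp [hx]⟩)

theorem entropy_eq_zero {s : Finset Ω} {g : Ω → α} (h : ∀ p ∈ s, ∀ q ∈ s, g p = g q) :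
    entropy s g = 0 := by
  classical
  refine Finset.sum_eq_zero fun p hp => ?_
  rw [fiberCard, Finset.filter_true_of_mem fun q hq => h q hq p hp, sub_self]

theorem sum_div_fiberCard [DecidableEq α] (s : Finset Ω) (g : Ω → α) (w : α → ℝ) :
    ∑ x ∈ s, w (g x) / fiberCard s g x = ∑ b ∈ s.image g, w b := by
  have fiberCard_eq (x : Ω) : fiberCard s g x = ({y ∈ s | g y = g x} : Finset Ω).card := by
    unfold fiberCard
    congr!
  simp only [fiberCard_eq]
  rw [Finset.sum_comp (fun b => w b / (({y ∈ s | g y = b} : Finset Ω).card : ℝ)) g]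
  refine Finset.sum_congr rfl fun b hb => ?_
  obtain ⟨x, hx, rfl⟩ := Finset.mem_image.1 hb
  have hpos := fiberCard_pos g hx
  rw [fiberCard_eq] at hpos
  rw [nsmul_eq_mul, mul_div_cancel₀ _ hpos.ne']

theorem sum_mul_fiberCard_le (s : Finset Ω) (f : Ω → α) (g : Ω → β) {w : α → β → ℝ}
    (hw : ∀ a b, 0 ≤ w a b) :
    ∑ x ∈ s, w (f x) (g x) * fiberCard s f x * fiberCard s g x /
        fiberCard s (fun x => (f x, g x)) x ≤
      ∑ x ∈ s, ∑ y ∈ s, w (f x) (g y) := by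
  classical
  let weight (ab : α × β) : ℝ := w ab.1 ab.2 * ({y ∈ s | f y = ab.1} : Finset Ω).card *
    ({y ∈ s | g y = ab.2} : Finset Ω).card
  calc _ = ∑ ab ∈ s.image (fun x => (f x, g x)), weight ab := by
        rw [← sum_div_fiberCard]
        refine Finset.sum_congr rfl fun x _ => ?_
        simp only [weight, fiberCard]
    _ ≤ ∑ ab ∈ s.image f ×ˢ s.image g, weight ab := by
        refine Finset.sum_le_sum_of_subset_of_nonneg (fun ab hab => ?_) fun ab _ _ => ?_
        · obtain ⟨x, hx, rfl⟩ := Finset.mem_image.1 hab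
          exact Finset.mem_product.2
            ⟨Finset.mem_image_of_mem _ hx, Finset.mem_image_of_mem _ hx⟩
        · have := hw ab.1 ab.2
          positivity
    _ = ∑ x ∈ s, ∑ y ∈ s, w (f x) (g y) := by
        rw [Finset.sum_product, Finset.sum_comp (fun a => ∑ y ∈ s, w a (g y)) f]
        refine Finset.sum_congr rfl fun a _ => ?_
        rw [Finset.sum_comp (fun b => w a b) g, nsmul_eq_mul, Finset.mul_sum]
        refine Finset.sum_congr rfl fun b _ => ?_
        simp only [weight, nsmul_eq_mul]
        ring

theorem entropy_mono {s : Finset Ω} {f : Ω → α} {g : Ω → β} (h : Determines s g f) :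
    entropy s f ≤ entropy s g := by
  classical
  refine Finset.sum_le_sum fun x hx =>
    sub_le_sub_left (Real.log_le_log (fiberCard_pos g hx) ?_) _
  refine Nat.cast_le.2 (Finset.card_le_card fun y hy => ?_)
  obtain ⟨hy, hyx⟩ := Finset.mem_filter.1 hy
  exact Finset.mem_filter.2 ⟨hy, h y hy x hx hyx⟩

theorem entropy_congr {s : Finset Ω} {f : Ω → α} {g : Ω → β} (hgf : Determines s g f)
    (hfg : Determines s f g) : entropy s f = entropy s g :=
  (entropy_mono hgf).antisymm (entropy_mono hfg)

theorem entropy_nonneg (s : Finset Ω) (g : Ω → α) : 0 ≤ entropy s g := by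
  classical
  refine Finset.sum_nonneg fun x hx => sub_nonneg.2 (Real.log_le_log (fiberCard_pos g hx) ?_)
  exact Nat.cast_le.2 (Finset.card_filter_le _ _)

theorem entropy_of_injOn {s : Finset Ω} {g : Ω → α} (hg : InjOn g s) :
    entropy s g = s.card * Real.log s.card := by
  classical
  have hfiber : ∀ x ∈ s, fiberCard s g x = 1 := fun x hx => by
    refine Nat.cast_eq_one.2 (Finset.card_eq_one.2 ⟨x, ?_⟩)
    ext y
    simp only [Finset.mem_filter, Finset.mem_singleton]
    exact ⟨fun h => hg h.1 hx h.2, fun h => ⟨h ▸ hx, by rw [h]⟩⟩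
  rw [entropy, Finset.sum_congr rfl fun x hx => by rw [hfiber x hx, Real.log_one, sub_zero],
    Finset.sum_const, nsmul_eq_mul]

theorem entropy_le_sum_neg_log [DecidableEq α] (s : Finset Ω) (g : Ω → α) {q : α → ℝ}
    (hq : ∀ a, 0 < q a) (hsum : ∑ b ∈ s.image g, q b ≤ 1) :
    entropy s g ≤ ∑ x ∈ s, -Real.log (q (g x)) := by
  have hterm : ∀ x ∈ s, Real.log s.card - Real.log (fiberCard s g x) ≤
      -Real.log (q (g x)) + (s.card * (q (g x) / fiberCard s g x) - 1) := fun x hx => by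
    have hqx := hq (g x)
    have hfiber := fiberCard_pos g hx
    have hcard : (0 : ℝ) < s.card := Nat.cast_pos.2 (Finset.card_pos.2 ⟨x, hx⟩)
    have hlog := Real.log_le_sub_one_of_pos (x := s.card * (q (g x) / fiberCard s g x))
      (by positivity)
    rw [Real.log_mul hcard.ne' (div_pos hqx hfiber).ne', Real.log_div hqx.ne' hfiber.ne'] at hlog
    linarith
  have htotal : ∑ x ∈ s, (s.card * (q (g x) / fiberCard s g x) - 1) ≤ 0 := by
    rw [Finset.sum_sub_distrib, ← Finset.mul_sum, sum_div_fiberCard s g q, Finset.sum_const,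
      nsmul_eq_mul, mul_one]
    exact sub_nonpos.2 (mul_le_of_le_one_right (Nat.cast_nonneg _) hsum)
  calc entropy s g
      ≤ ∑ x ∈ s, (-Real.log (q (g x)) + (s.card * (q (g x) / fiberCard s g x) - 1)) :=
        Finset.sum_le_sum hterm
    _ ≤ ∑ x ∈ s, -Real.log (q (g x)) := by
        rw [Finset.sum_add_distrib]
        linarith

theorem entropy_le_card_mul_log (s : Finset Ω) (g : Ω → α) {N : ℝ}
    (hN : ((g '' (s : Set Ω)).ncard : ℝ) ≤ N) : entropy s g ≤ s.card * Real.log N := by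
  classical
  rcases s.eq_empty_or_nonempty with rfl | hs
  · simp [entropy]
  rw [← Finset.coe_image, Set.ncard_coe_finset] at hN
  have hpos : (0 : ℝ) < (s.image g).card := Nat.cast_pos.2 (Finset.card_pos.2 (hs.image g))
  calc entropy s g ≤ ∑ _ ∈ s, -Real.log (1 / ((s.image g).card : ℝ)) :=
        entropy_le_sum_neg_log s g (q := fun _ => 1 / ((s.image g).card : ℝ))
          (fun _ => by positivity) (by simp [hpos.ne'])
    _ = s.card * Real.log (s.image g).card := by
        rw [Finset.sum_const, nsmul_eq_mul, one_div, Real.log_inv, neg_neg]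
    _ ≤ s.card * Real.log N := by gcongr

/-- The Donsker–Varadhan bound for mutual information. -/
theorem sum_le_mutualInfo_add (s : Finset Ω) (f : Ω → α) (g : Ω → β) (h : α → β → ℝ) :
    ∑ x ∈ s, h (f x) (g x) ≤ mutualInfo s f g +
      ((∑ x ∈ s, ∑ y ∈ s, Real.exp (h (f x) (g y))) / s.card - s.card) := by
  let density (x : Ω) : ℝ := Real.exp (h (f x) (g x)) * fiberCard s f x * fiberCard s g x /
    fiberCard s (fun x => (f x, g x)) x
  have hterm : ∀ x ∈ s, h (f x) (g x) + Real.log (fiberCard s f x) + Real.log (fiberCard s g x)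
      - Real.log (fiberCard s (fun x => (f x, g x)) x) - Real.log s.card ≤
      density x / s.card - 1 := fun x hx => by
    have hf := fiberCard_pos f hx
    have hg := fiberCard_pos g hx
    have hfg := fiberCard_pos (fun x => (f x, g x)) hx
    have hcard : (0 : ℝ) < s.card := Nat.cast_pos.2 (Finset.card_pos.2 ⟨x, hx⟩)
    have hlog := Real.log_le_sub_one_of_pos (x := density x / s.card) (by positivity)
    rw [Real.log_div (by positivity) hcard.ne', Real.log_div (by positivity) hfg.ne',
      Real.log_mul (by positivity) hg.ne', Real.log_mul (Real.exp_ne_zero _) hf.ne',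
      Real.log_exp] at hlog
    exact hlog
  have htotal : ∑ x ∈ s, (density x / s.card - 1) ≤
      (∑ x ∈ s, ∑ y ∈ s, Real.exp (h (f x) (g y))) / s.card - s.card := by
    rw [Finset.sum_sub_distrib, ← Finset.sum_div, Finset.sum_const, nsmul_eq_mul, mul_one]
    gcongr ?_ / _ - _
    exact sum_mul_fiberCard_le s f g fun a b => (Real.exp_pos (h a b)).le
  have hsum := (Finset.sum_le_sum hterm).trans htotal
  simp only [mutualInfo, entropy, Finset.sum_add_distrib, Finset.sum_sub_distrib] at hsum ⊢
  linarith

theorem mutualInfo_nonneg (s : Finset Ω) (f : Ω → α) (g : Ω → β) : 0 ≤ mutualInfo s f g := by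
  simpa [mul_self_div_self] using sum_le_mutualInfo_add s f g fun _ _ => 0

theorem condEntropy_eq_sum [DecidableEq β] (s : Finset Ω) (f : Ω → α) (A : Ω → β) :
    condEntropy s f A = ∑ a ∈ s.image A, entropy {x ∈ s | A x = a} f := by
  classical
  rw [condEntropy, entropy, entropy, ← Finset.sum_sub_distrib,
    ← Finset.sum_fiberwise_of_maps_to fun x => Finset.mem_image_of_mem A]
  refine Finset.sum_congr rfl fun a _ => Finset.sum_congr rfl fun x hx => ?_
  obtain rfl : A x = a := (Finset.mem_filter.1 hx).2
  have hpair : fiberCard s (fun y => (f y, A y)) x = fiberCard {y ∈ s | A y = A x} f x := by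
    simp only [fiberCard, Finset.filter_filter, Prod.mk.injEq, and_comm]
  have hcard : fiberCard s A x = (({y ∈ s | A y = A x} : Finset Ω).card : ℝ) := by
    unfold fiberCard
    congr!
  rw [hpair, hcard]
  ring

theorem condEntropy_le_card_mul_log [DecidableEq β] (s : Finset Ω) (f : Ω → α) (A : Ω → β)
    {N : ℝ} (hN : ∀ a, ((f '' ({x ∈ s | A x = a} : Finset Ω)).ncard : ℝ) ≤ N) :
    condEntropy s f A ≤ s.card * Real.log N := by
  rw [condEntropy_eq_sum, Finset.card_eq_sum_card_image A s, Nat.cast_sum, Finset.sum_mul]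
  exact Finset.sum_le_sum fun a _ => entropy_le_card_mul_log _ f (hN a)

theorem condMutualInfo_eq_sum [DecidableEq γ] (s : Finset Ω) (f : Ω → α) (g : Ω → β)
    (A : Ω → γ) : condMutualInfo s f g A = ∑ a ∈ s.image A, mutualInfo {x ∈ s | A x = a} f g := by
  simp only [condMutualInfo, mutualInfo, condEntropy_eq_sum, Finset.sum_add_distrib,
    Finset.sum_sub_distrib]

theorem condMutualInfo_nonneg (s : Finset Ω) (f : Ω → α) (g : Ω → β) (A : Ω → γ) :
    0 ≤ condMutualInfo s f g A := by
  classical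
  rw [condMutualInfo_eq_sum]
  exact Finset.sum_nonneg fun a _ => mutualInfo_nonneg _ f g

theorem condEntropy_anti (s : Finset Ω) (f : Ω → α) {A : Ω → β} {A' : Ω → γ}
    (h : Determines s A' A) : condEntropy s f A' ≤ condEntropy s f A := by
  have hsub := condMutualInfo_nonneg s f A' A
  have htriple : entropy s (fun p => ((f p, A' p), A p)) = entropy s (fun p => (f p, A' p)) :=
    entropy_congr (fun p hp q hq => by have := h p hp q hq; grind)
      (fun p _ q _ => by grind)
  have hpair : entropy s (fun p => (A' p, A p)) = entropy s A' :=
    entropy_congr (fun p hp q hq => by have := h p hp q hq; grind)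
      (fun p _ q _ => by grind)
  simp only [condMutualInfo, condEntropy] at hsub ⊢
  linarith

variable {δ ε ζ : Type*}

theorem condMutualInfo_le_condEntropy_sub {s : Finset Ω} {X : Ω → α} {W : Ω → β} {b : Ω → γ}
    {y : Ω → δ} {y' : Ω → ε} {A : Ω → ζ} (hXW : Determines s X W) (hby : Determines s b y)
    (hby' : Determines s b y') (hAy : Determines s A y) (hAW : Determines s A W)
    (hXA : Determines s (fun p => (X p, y p)) A) :
    condMutualInfo s X y' A ≤ condEntropy s b W - condEntropy s b X := by
  have hanti : condEntropy s y' A ≤ condEntropy s y' (fun p => (y p, W p)) :=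
    condEntropy_anti s y' fun p hp q hq h => by rw [hAy p hp q hq h, hAW p hp q hq h]
  have hXy := condMutualInfo_nonneg s X y W
  have hXb := condMutualInfo_nonneg s X b (fun p => (y' p, (y p, W p)))
  have e₀ : entropy s (fun p => (X p, W p)) = entropy s X :=
    entropy_congr (fun p hp q hq => by have := hXW p hp q hq; grind) fun p _ q _ => by grind
  have e₁ : entropy s (fun p => (X p, A p)) = entropy s (fun p => ((X p, y p), W p)) :=
    entropy_congr (fun p hp q hq => by have := hXA p hp q hq; grind)
      fun p hp q hq => by have := hAy p hp q hq; have := hAW p hp q hq; grind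
  have e₂ : entropy s (fun p => ((X p, y' p), A p)) =
      entropy s (fun p => (X p, (y' p, (y p, W p)))) :=
    entropy_congr (fun p hp q hq => by have := hXA p hp q hq; grind)
      fun p hp q hq => by have := hAy p hp q hq; have := hAW p hp q hq; grind
  have e₃ : entropy s (fun p => ((X p, b p), (y' p, (y p, W p)))) =
      entropy s (fun p => (b p, X p)) :=
    entropy_congr
      (fun p hp q hq => by
        have := hXW p hp q hq; have := hby p hp q hq; have := hby' p hp q hq; grind)
      fun p _ q _ => by grind
  have e₄ : entropy s (fun p => (b p, (y' p, (y p, W p)))) = entropy s (fun p => (b p, W p)) :=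
    entropy_congr (fun p hp q hq => by
        have := hby p hp q hq; have := hby' p hp q hq; grind)
      fun p _ q _ => by grind
  simp only [condMutualInfo, condEntropy] at *
  linarith

end Entropy

section Block

variable {Ω α β γ : Type*}

theorem sum_half_pow_natAbs_le (u : Finset ℤ) (n : ℤ) :
    ∑ b ∈ u, (1 / 2 : ℝ) ^ (b - n).natAbs ≤ 4 := by
  have hside : ∀ v : Finset ℤ, InjOn (fun b : ℤ => (b - n).natAbs) v →
      ∑ b ∈ v, (1 / 2 : ℝ) ^ (b - n).natAbs ≤ 2 := fun v hv => by
    rw [← Finset.sum_image (f := fun k : ℕ => (1 / 2 : ℝ) ^ k) hv]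
    exact (summable_geometric_two.sum_le_tsum _ fun k _ => by positivity).trans_eq
      tsum_geometric_two
  rw [← Finset.sum_filter_add_sum_filter_not u (n ≤ ·)]
  have hright := hside {b ∈ u | n ≤ b} fun a ha b hb hab => by
    simp only [Finset.coe_filter, mem_ofPred_eq] at ha hb hab
    lia
  have hleft := hside {b ∈ u | ¬ n ≤ b} fun a ha b hb hab => by
    simp only [Finset.coe_filter, mem_ofPred_eq] at ha hb hab
    lia
  linarith

/-- Compare with the geometric distribution centred at `⌊c⌋`. -/
theorem entropy_le_sum_abs_sub (t : Finset Ω) (y : Ω → ℤ) (c : ℝ) :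
    entropy t y ≤ Real.log 2 * (3 * t.card + ∑ p ∈ t, |(y p : ℝ) - c|) := by
  have hdist (b : ℤ) : ((b - ⌊c⌋).natAbs : ℝ) ≤ |(b : ℝ) - c| + 1 := by
    have hfract : |c - ⌊c⌋| ≤ 1 := by
      rw [Int.self_sub_floor, abs_of_nonneg (Int.fract_nonneg c)]
      exact (Int.fract_lt_one c).le
    rw [Nat.cast_natAbs, Int.cast_abs, Int.cast_sub]
    linarith [abs_sub_le (b : ℝ) c ⌊c⌋]
  have hlog (b : ℤ) : -Real.log (1 / 4 * (1 / 2 : ℝ) ^ (b - ⌊c⌋).natAbs) ≤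
      Real.log 2 * (3 + |(b : ℝ) - c|) := by
    have hquarter : (1 / 4 : ℝ) = (1 / 2) ^ 2 := by norm_num
    rw [hquarter, ← pow_add, Real.log_pow, one_div, Real.log_inv, Nat.cast_add,
      Nat.cast_two]
    nlinarith [hdist b, Real.log_pos one_lt_two]
  calc entropy t y ≤ ∑ p ∈ t, -Real.log (1 / 4 * (1 / 2 : ℝ) ^ (y p - ⌊c⌋).natAbs) := by
        refine entropy_le_sum_neg_log t y (q := fun b => 1 / 4 * (1 / 2 : ℝ) ^ (b - ⌊c⌋).natAbs)
          (fun b => by positivity) ?_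
        rw [← Finset.mul_sum]
        linarith [sum_half_pow_natAbs_le (t.image y) ⌊c⌋]
    _ ≤ ∑ p ∈ t, Real.log 2 * (3 + |(y p : ℝ) - c|) := Finset.sum_le_sum fun p _ => hlog (y p)
    _ = Real.log 2 * (3 * t.card + ∑ p ∈ t, |(y p : ℝ) - c|) := by
        rw [← Finset.mul_sum, Finset.sum_add_distrib, Finset.sum_const, nsmul_eq_mul,
          mul_comm (3 : ℝ)]

theorem sum_mul_le_card_add_mutualInfo {t : Finset Ω} {X : Ω → α} (y : Ω → β) {v : α → ℝ}
    {σ : β → ℝ} {R : ℝ} (hR : 1 ≤ R) (hv : ∀ p ∈ t, |v (X p)| ≤ R) (hsum : ∑ p ∈ t, v (X p) = 0)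
    (hσ : ∀ b, |σ b| ≤ 1) :
    ∑ p ∈ t, σ (y p) * v (X p) ≤ t.card + R ^ 2 * mutualInfo t X y := by
  have hRpos : 0 < R := zero_lt_one.trans_le hR
  let h (a : α) (b : β) : ℝ := σ b * v a / R ^ 2
  have hexp : ∀ p ∈ t, ∀ b, Real.exp (h (X p) b) ≤ (1 + 1 / R ^ 2) + h (X p) b := fun p hp b => by
    have hsmall : |h (X p) b| ≤ 1 / R := by
      rw [abs_div, abs_mul, abs_of_pos (pow_pos hRpos 2), div_le_div_iff₀ (by positivity) hRpos]
      nlinarith [mul_le_mul (hσ b) (hv p hp) (abs_nonneg _) zero_le_one]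
    have hone : |h (X p) b| ≤ 1 := hsmall.trans ((div_le_one hRpos).2 hR)
    have hsq : h (X p) b ^ 2 ≤ 1 / R ^ 2 := by
      rw [← sq_abs, ← one_div_pow]
      exact pow_le_pow_left₀ (abs_nonneg _) hsmall 2
    linarith [(abs_le.1 (Real.abs_exp_sub_one_sub_id_le hone)).2]
  have hcross : ∑ p ∈ t, ∑ q ∈ t, h (X p) (y q) = 0 := by
    rw [Finset.sum_comm]
    refine Finset.sum_eq_zero fun q _ => ?_
    rw [← Finset.sum_div, ← Finset.mul_sum, hsum, mul_zero, zero_div]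
  have hexpsum : ∑ p ∈ t, ∑ q ∈ t, Real.exp (h (X p) (y q)) ≤
      t.card * (t.card * (1 + 1 / R ^ 2)) := by
    calc _ ≤ ∑ p ∈ t, ∑ q ∈ t, ((1 + 1 / R ^ 2) + h (X p) (y q)) :=
          Finset.sum_le_sum fun p hp => Finset.sum_le_sum fun q _ => hexp p hp (y q)
      _ = t.card * (t.card * (1 + 1 / R ^ 2)) := by
          simp only [Finset.sum_add_distrib, hcross, Finset.sum_const, nsmul_eq_mul]
          ring
  have hexcess : (∑ p ∈ t, ∑ q ∈ t, Real.exp (h (X p) (y q))) / t.card - t.card ≤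
      t.card / R ^ 2 := by
    rcases t.eq_empty_or_nonempty with rfl | ht
    · simp
    rw [sub_le_iff_le_add, div_le_iff₀ (Nat.cast_pos.2 ht.card_pos)]
    exact hexpsum.trans_eq (by ring)
  have hDV := sum_le_mutualInfo_add t X y h
  calc ∑ p ∈ t, σ (y p) * v (X p) = R ^ 2 * ∑ p ∈ t, h (X p) (y p) := by
        rw [← Finset.sum_div, mul_div_cancel₀ _ (pow_pos hRpos 2).ne']
    _ ≤ R ^ 2 * (mutualInfo t X y + t.card / R ^ 2) := by gcongr; linarith
    _ = t.card + R ^ 2 * mutualInfo t X y := by field_simp; ring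

theorem abs_sub_average_le {t : Finset Ω} {x : Ω → ℝ} {R : ℝ}
    (hx : ∀ p ∈ t, ∀ q ∈ t, |x p - x q| ≤ R) {p : Ω} (hp : p ∈ t) :
    |x p - (∑ q ∈ t, x q) / t.card| ≤ R := by
  have hcard : (0 : ℝ) < t.card := Nat.cast_pos.2 (Finset.card_pos.2 ⟨p, hp⟩)
  calc |x p - (∑ q ∈ t, x q) / t.card| = |∑ q ∈ t, (x p - x q)| / t.card := by
        rw [Finset.sum_sub_distrib, Finset.sum_const, nsmul_eq_mul, ← abs_of_pos hcard, ← abs_div,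
          abs_of_pos hcard, sub_div, mul_div_cancel_left₀ _ hcard.ne']
    _ ≤ (∑ _ ∈ t, R) / t.card := by
        gcongr
        exact (Finset.abs_sum_le_sum_abs _ _).trans (Finset.sum_le_sum fun q hq => hx p hp q hq)
    _ = R := by rw [Finset.sum_const, nsmul_eq_mul, mul_div_cancel_left₀ _ hcard.ne']

theorem exists_center_sum_mul_le {t : Finset Ω} {X : Ω → α} (y : Ω → β) {x : Ω → ℝ} {L R : ℝ}
    (hR : 1 ≤ R) (hL : ∀ p ∈ t, ∀ q ∈ t, X p = X q → |x p - x q| ≤ L)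
    (hxR : ∀ p ∈ t, ∀ q ∈ t, |x p - x q| ≤ R) :
    ∃ μ : ℝ, ∀ σ : β → ℝ, (∀ b, |σ b| ≤ 1) →
      ∑ p ∈ t, σ (y p) * (x p - μ) ≤ t.card * (1 + L) + R ^ 2 * mutualInfo t X y := by
  rcases t.eq_empty_or_nonempty with rfl | ht
  · exact ⟨0, fun σ _ => by simp [mutualInfo, entropy]⟩
  have : Nonempty Ω := ⟨ht.choose⟩
  let rep (p : Ω) : Ω := Function.invFunOn X t (X p)
  have rep_mem : ∀ p ∈ t, rep p ∈ t := fun p hp => Function.invFunOn_mem ⟨p, hp, rfl⟩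
  have hrep : ∀ p ∈ t, |x p - x (rep p)| ≤ L := fun p hp =>
    hL p hp _ (rep_mem p hp) (Function.invFunOn_eq ⟨p, hp, rfl⟩).symm
  let μ : ℝ := (∑ p ∈ t, x (rep p)) / t.card
  refine ⟨μ, fun σ hσ => ?_⟩
  have hcentred : ∑ p ∈ t, (x (rep p) - μ) = 0 := by
    rw [Finset.sum_sub_distrib, Finset.sum_const, nsmul_eq_mul,
      mul_div_cancel₀ _ (Nat.cast_pos.2 ht.card_pos).ne', sub_self]
  have hinfo := sum_mul_le_card_add_mutualInfo (X := X) y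
    (v := fun a => x (Function.invFunOn X t a) - μ) hR
    (fun p hp => abs_sub_average_le (x := fun p => x (rep p))
      (fun p hp q hq => hxR _ (rep_mem p hp) _ (rep_mem q hq)) hp) hcentred hσ
  have hterm : ∀ p ∈ t, σ (y p) * (x p - μ) ≤ σ (y p) * (x (rep p) - μ) + L := fun p hp => by
    have hprod := mul_le_mul (hσ (y p)) (hrep p hp) (abs_nonneg _) zero_le_one
    rw [← abs_mul] at hprod
    linarith [le_abs_self (σ (y p) * (x p - x (rep p)))]
  calc ∑ p ∈ t, σ (y p) * (x p - μ) ≤ ∑ p ∈ t, (σ (y p) * (x (rep p) - μ) + L) :=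
        Finset.sum_le_sum hterm
    _ = ∑ p ∈ t, σ (y p) * (x (rep p) - μ) + t.card * L := by
        rw [Finset.sum_add_distrib, Finset.sum_const, nsmul_eq_mul]
    _ ≤ t.card * (1 + L) + R ^ 2 * mutualInfo t X y := by linarith

theorem entropy_le_of_difference {t : Finset Ω} {y : Ω → ℤ} {X₀ : Ω → α} {X₁ : Ω → β}
    {x₀ x₁ : Ω → ℝ} {L R : ℝ} (hR : 1 ≤ R) (hy : ∀ p ∈ t, |x₁ p - x₀ p - y p| ≤ 1)
    (hL₀ : ∀ p ∈ t, ∀ q ∈ t, X₀ p = X₀ q → |x₀ p - x₀ q| ≤ L)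
    (hL₁ : ∀ p ∈ t, ∀ q ∈ t, X₁ p = X₁ q → |x₁ p - x₁ q| ≤ L)
    (hR₀ : ∀ p ∈ t, ∀ q ∈ t, |x₀ p - x₀ q| ≤ R) (hR₁ : ∀ p ∈ t, ∀ q ∈ t, |x₁ p - x₁ q| ≤ R) :
    entropy t y ≤ Real.log 2 *
      (t.card * (6 + 2 * L) + R ^ 2 * (mutualInfo t X₀ y + mutualInfo t X₁ y)) := by
  obtain ⟨μ₀, h₀⟩ := exists_center_sum_mul_le y hR hL₀ hR₀
  obtain ⟨μ₁, h₁⟩ := exists_center_sum_mul_le y hR hL₁ hR₁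
  let c : ℝ := μ₁ - μ₀
  let σ (b : ℤ) : ℝ := if c ≤ b then 1 else -1
  have hσ (b : ℤ) : |σ b| ≤ 1 := by
    simp only [σ]
    split_ifs <;> simp
  have hσ_mul (b : ℤ) : σ b * (b - c) = |(b : ℝ) - c| := by
    simp only [σ]
    split_ifs with hcb
    · rw [one_mul, abs_of_nonneg (sub_nonneg.2 hcb)]
    · rw [neg_one_mul, abs_of_neg (sub_neg.2 (not_le.1 hcb))]
  have hterm : ∀ p ∈ t, |(y p : ℝ) - c| ≤
      σ (y p) * (x₁ p - μ₁) + -σ (y p) * (x₀ p - μ₀) + 1 := fun p hp => by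
    have hprod := mul_le_mul (hσ (y p)) (hy p hp) (abs_nonneg _) zero_le_one
    rw [← abs_mul] at hprod
    rw [← hσ_mul]
    linarith [neg_abs_le (σ (y p) * (x₁ p - x₀ p - y p))]
  have hdev : ∑ p ∈ t, |(y p : ℝ) - c| ≤
      t.card * (3 + 2 * L) + R ^ 2 * (mutualInfo t X₀ y + mutualInfo t X₁ y) := by
    have hsum := Finset.sum_le_sum hterm
    rw [Finset.sum_add_distrib, Finset.sum_add_distrib, Finset.sum_const, nsmul_eq_mul] at hsum
    linarith [h₀ (fun b => -σ b) fun b => by rw [abs_neg]; exact hσ b, h₁ σ hσ]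
  calc entropy t y ≤ Real.log 2 * (3 * t.card + ∑ p ∈ t, |(y p : ℝ) - c|) :=
        entropy_le_sum_abs_sub t y c
    _ ≤ _ := mul_le_mul_of_nonneg_left (by linarith) (Real.log_pos one_lt_two).le

theorem condEntropy_le_of_difference {s : Finset Ω} {y : Ω → ℤ} {X₀ : Ω → α} {X₁ : Ω → β}
    {A : Ω → γ} {x₀ x₁ : Ω → ℝ} {L R : ℝ} (hR : 1 ≤ R)
    (hy : ∀ p ∈ s, |x₁ p - x₀ p - y p| ≤ 1)
    (hL₀ : ∀ p ∈ s, ∀ q ∈ s, X₀ p = X₀ q → |x₀ p - x₀ q| ≤ L)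
    (hL₁ : ∀ p ∈ s, ∀ q ∈ s, X₁ p = X₁ q → |x₁ p - x₁ q| ≤ L)
    (hR₀ : ∀ p ∈ s, ∀ q ∈ s, A p = A q → |x₀ p - x₀ q| ≤ R)
    (hR₁ : ∀ p ∈ s, ∀ q ∈ s, A p = A q → |x₁ p - x₁ q| ≤ R) :
    condEntropy s y A ≤ Real.log 2 * (s.card * (6 + 2 * L) +
      R ^ 2 * (condMutualInfo s X₀ y A + condMutualInfo s X₁ y A)) := by
  classical
  rw [condEntropy_eq_sum, condMutualInfo_eq_sum, condMutualInfo_eq_sum,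
    Finset.card_eq_sum_card_image A s, Nat.cast_sum, Finset.sum_mul, ← Finset.sum_add_distrib,
    Finset.mul_sum, ← Finset.sum_add_distrib, Finset.mul_sum]
  refine Finset.sum_le_sum fun a _ => ?_
  have mem {p : Ω} (hp : p ∈ ({p ∈ s | A p = a} : Finset Ω)) : p ∈ s ∧ A p = a :=
    Finset.mem_filter.1 hp
  exact entropy_le_of_difference hR (fun p hp => hy p (mem hp).1)
    (fun p hp q hq => hL₀ p (mem hp).1 q (mem hq).1)
    (fun p hp q hq => hL₁ p (mem hp).1 q (mem hq).1)
    (fun p hp q hq => hR₀ p (mem hp).1 q (mem hq).1 ((mem hp).2.trans (mem hq).2.symm))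
    (fun p hp q hq => hR₁ p (mem hp).1 q (mem hq).1 ((mem hp).2.trans (mem hq).2.symm))

end Block

section Cover

/-- `E` meets every ball of radius `R` in a set covered by at most `C (R / r) ^ α` sets of diameter
at most `r`: the condition on `α` and `C` in the definition of the Assouad dimension. -/
def CoverBound {X : Type*} [PseudoMetricSpace X] (E : Set X) (α C : ℝ) : Prop :=
  ∀ x ∈ E, ∀ r R : ℝ, 0 < r → r < R → ∃ 𝒰 : Finset (Set X), (E ∩ closedBall x R ⊆ ⋃ U ∈ 𝒰, U) ∧
    (∀ U ∈ 𝒰, ediam U ≤ ENNReal.ofReal r) ∧ ((𝒰.card : ℝ) ≤ C * (R / r) ^ α)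

theorem assouadDim_eq_sInf {X : Type*} [PseudoMetricSpace X] (E : Set X) :
    assouadDim E = sInf {α : ℝ | 0 ≤ α ∧ ∃ C : ℝ, 0 < C ∧ CoverBound E α C} :=
  rfl

theorem ediam_le_ofReal_iff {X : Type*} [PseudoMetricSpace X] {U : Set X} {r : ℝ} (hr : 0 ≤ r) :
    ediam U ≤ ENNReal.ofReal r ↔ ∀ a ∈ U, ∀ b ∈ U, dist a b ≤ r := by
  simp only [ediam_le_iff, edist_dist, ENNReal.ofReal_le_ofReal_iff hr]

theorem CoverBound.mono {X : Type*} [PseudoMetricSpace X] {E : Set X} {α β C : ℝ}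
    (h : CoverBound E α C) (hC : 0 ≤ C) (hαβ : α ≤ β) : CoverBound E β C :=
  fun x hx r R hr hrR => by
  obtain ⟨𝒰, hcover, hdiam, hcard⟩ := h x hx r R hr hrR
  refine ⟨𝒰, hcover, hdiam, hcard.trans ?_⟩
  gcongr
  exact (one_le_div hr).2 hrR.le

theorem CoverBound.subset {X : Type*} [PseudoMetricSpace X] {E E' : Set X} {α C : ℝ}
    (h : CoverBound E' α C) (hE : E ⊆ E') : CoverBound E α C := fun x hx r R hr hrR => by
  obtain ⟨𝒰, hcover, hdiam, hcard⟩ := h x (hE hx) r R hr hrR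
  exact ⟨𝒰, (inter_subset_inter_left _ hE).trans hcover, hdiam, hcard⟩

theorem assouadDim_nonneg {X : Type*} [PseudoMetricSpace X] (E : Set X) : 0 ≤ assouadDim E :=
  Real.sInf_nonneg fun _ hβ => hβ.1

theorem assouadDim_le_of_coverBound {X : Type*} [PseudoMetricSpace X] {E : Set X} {α C : ℝ}
    (hα : 0 ≤ α) (hC : 0 < C) (h : CoverBound E α C) : assouadDim E ≤ α :=
  csInf_le ⟨0, fun _ hβ => hβ.1⟩ ⟨hα, C, hC, h⟩

theorem card_Icc_floor_le {a b : ℝ} (hab : a ≤ b) :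
    ((Finset.Icc ⌊a⌋ ⌊b⌋).card : ℝ) ≤ b - a + 2 := by
  have hcard : ((Finset.Icc ⌊a⌋ ⌊b⌋).card : ℤ) = ⌊b⌋ + 1 - ⌊a⌋ :=
    Int.card_Icc_of_le _ _ ((Int.floor_le_floor hab).trans (lt_add_one _).le)
  rw [← Int.cast_natCast, hcard]
  push_cast
  linarith [Int.floor_le b, Int.lt_floor_add_one a]

theorem coverBound_one (E : Set ℝ) : CoverBound E 1 4 := fun x _ r R hr hrR => by
  have hends : (x - R) / r ≤ (x + R) / r := by gcongr; linarith
  refine ⟨(Finset.Icc ⌊(x - R) / r⌋ ⌊(x + R) / r⌋).image fun k : ℤ => Icc (k * r) ((k + 1) * r),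
    fun y hy => ?_, fun U hU => ?_, ?_⟩
  · obtain ⟨-, hy⟩ := hy
    rw [mem_closedBall, Real.dist_eq, abs_le] at hy
    simp only [Finset.mem_image, mem_iUnion]
    refine ⟨_, ⟨⌊y / r⌋, Finset.mem_Icc.2 ⟨?_, ?_⟩, rfl⟩, mem_Icc.2 ⟨?_, ?_⟩⟩
    · exact Int.floor_le_floor (by gcongr; linarith)
    · exact Int.floor_le_floor (by gcongr; linarith)
    · exact (le_div_iff₀ hr).1 (Int.floor_le _)
    · exact (div_le_iff₀ hr).1 (Int.lt_floor_add_one _).le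
  · obtain ⟨k, -, rfl⟩ := Finset.mem_image.1 hU
    rw [ediam_le_ofReal_iff hr.le]
    intro a ha b hb
    exact (Real.dist_le_of_mem_Icc ha hb).trans_eq (by ring)
  · calc _ ≤ ((Finset.Icc ⌊(x - R) / r⌋ ⌊(x + R) / r⌋).card : ℝ) :=
          Nat.cast_le.2 Finset.card_image_le
      _ ≤ (x + R) / r - (x - R) / r + 2 := card_Icc_floor_le hends
      _ ≤ 4 * (R / r) ^ (1 : ℝ) := by
          have hratio : 1 ≤ R / r := (one_le_div hr).2 hrR.le
          rw [Real.rpow_one, ← sub_div]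
          linarith [show (x + R - (x - R)) / r = 2 * (R / r) by ring]

theorem exists_coverBound_of_assouadDim_lt {E : Set ℝ} {α : ℝ} (h : assouadDim E < α) :
    ∃ C : ℝ, 0 < C ∧ CoverBound E α C := by
  have hone : 1 ∈ {α : ℝ | 0 ≤ α ∧ ∃ C : ℝ, 0 < C ∧ CoverBound E α C} :=
    ⟨zero_le_one, 4, four_pos, coverBound_one E⟩
  rw [assouadDim_eq_sInf] at h
  obtain ⟨β, ⟨_, C, hC, hβ⟩, hβα⟩ := exists_lt_of_csInf_lt ⟨1, hone⟩ h
  exact ⟨C, hC, hβ.mono hC.le hβα.le⟩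

theorem assouadDim_mono {E E' : Set ℝ} (h : E ⊆ E') : assouadDim E ≤ assouadDim E' := by
  refine le_of_forall_gt_imp_ge_of_dense fun α hα => ?_
  obtain ⟨C, hC, hcov⟩ := exists_coverBound_of_assouadDim_lt hα
  exact assouadDim_le_of_coverBound ((assouadDim_nonneg E').trans hα.le) hC (hcov.subset h)

end Cover

section Dyadic

/-- The index of the dyadic interval of length `2 ^ (-i)` containing `x`. -/
def dyadic (i : ℤ) (x : ℝ) : ℤ := ⌊x * (2 : ℝ) ^ i⌋

theorem dyadic_eq_ediv (i : ℤ) (n : ℕ) (x : ℝ) :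
    dyadic i x = dyadic (i + n) x / ((2 ^ n : ℕ) : ℤ) := by
  unfold dyadic
  rw [← Int.floor_div_natCast, zpow_add₀ two_ne_zero, zpow_natCast, Nat.cast_pow, Nat.cast_ofNat,
    ← mul_assoc, mul_div_cancel_right₀ _ (pow_ne_zero n two_ne_zero)]

theorem dyadic_nested {i i' : ℤ} (h : i ≤ i') {x y : ℝ} (hxy : dyadic i' x = dyadic i' y) :
    dyadic i x = dyadic i y := by
  obtain ⟨n, rfl⟩ := Int.le.dest h
  rw [dyadic_eq_ediv i n x, dyadic_eq_ediv i n y, hxy]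

theorem abs_sub_le_of_dyadic_eq {i : ℤ} {x y : ℝ} (h : dyadic i x = dyadic i y) :
    |x - y| ≤ (2 : ℝ) ^ (-i) := by
  have hpos : (0 : ℝ) < 2 ^ i := zpow_pos two_pos i
  have hlt := Int.abs_sub_lt_one_of_floor_eq_floor h
  rw [← sub_mul, abs_mul, abs_of_pos hpos] at hlt
  rw [zpow_neg, ← one_div, le_div_iff₀ hpos]
  exact hlt.le

theorem abs_dyadic_sub_sub_lt_one (i : ℤ) (x y : ℝ) :
    |((dyadic i x - dyadic i y : ℤ) : ℝ) - (x - y) * 2 ^ i| < 1 := by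
  unfold dyadic
  push_cast
  rw [abs_lt]
  constructor <;> linarith [Int.floor_le (x * 2 ^ i), Int.lt_floor_add_one (x * 2 ^ i),
    Int.floor_le (y * 2 ^ i), Int.lt_floor_add_one (y * 2 ^ i)]

theorem zpow_neg_le_abs_sub_of_two_le {i : ℤ} {x y : ℝ} (h : 2 ≤ |dyadic i x - dyadic i y|) :
    (2 : ℝ) ^ (-i) ≤ |x - y| := by
  have hpos : (0 : ℝ) < 2 ^ i := zpow_pos two_pos i
  rw [zpow_neg, ← one_div, div_le_iff₀ hpos, ← abs_of_pos hpos, ← abs_mul]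
  have hfar : (2 : ℝ) ≤ |((dyadic i x - dyadic i y : ℤ) : ℝ)| := by exact_mod_cast h
  linarith [abs_dyadic_sub_sub_lt_one i x y,
    abs_sub_abs_le_abs_sub ((dyadic i x - dyadic i y : ℤ) : ℝ) ((x - y) * 2 ^ i)]

theorem abs_sub_le_of_abs_dyadic_sub_le_one {i : ℤ} {x y : ℝ}
    (h : |dyadic i x - dyadic i y| ≤ 1) : |x - y| ≤ 2 * (2 : ℝ) ^ (-i) := by
  have hpos : (0 : ℝ) < 2 ^ i := zpow_pos two_pos i
  rw [zpow_neg, ← div_eq_mul_inv, le_div_iff₀ hpos, ← abs_of_pos hpos, ← abs_mul]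
  have hnear : |((dyadic i x - dyadic i y : ℤ) : ℝ)| ≤ 1 := by exact_mod_cast h
  have hround := abs_dyadic_sub_sub_lt_one i x y
  rw [abs_sub_comm] at hround
  linarith [abs_sub_abs_le_abs_sub ((x - y) * 2 ^ i) ((dyadic i x - dyadic i y : ℤ) : ℝ)]

theorem dyadic_mem_Icc_floor {i : ℤ} {x y D : ℝ} (h : |x - y| ≤ D * (2 : ℝ) ^ (-i)) :
    dyadic i y ∈ Finset.Icc ⌊x * 2 ^ i - D⌋ ⌊x * 2 ^ i + D⌋ := by
  have hpos : (0 : ℝ) < 2 ^ i := zpow_pos two_pos i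
  rw [zpow_neg, ← div_eq_mul_inv, le_div_iff₀ hpos, ← abs_of_pos hpos, ← abs_mul, sub_mul,
    abs_le] at h
  exact Finset.mem_Icc.2 ⟨Int.floor_le_floor (by linarith), Int.floor_le_floor (by linarith)⟩

theorem ncard_image_dyadic_le {T : Set ℝ} {i : ℤ} {D : ℝ} (hD : 0 ≤ D)
    (h : ∀ x ∈ T, ∀ y ∈ T, |x - y| ≤ D * (2 : ℝ) ^ (-i)) :
    ((dyadic i '' T).ncard : ℝ) ≤ 2 * D + 2 := by
  rcases T.eq_empty_or_nonempty with rfl | ⟨x, hx⟩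
  · rw [image_empty, ncard_empty, Nat.cast_zero]
    positivity
  have hsub : dyadic i '' T ⊆ Finset.Icc ⌊x * 2 ^ i - D⌋ ⌊x * 2 ^ i + D⌋ := by
    rintro _ ⟨y, hy, rfl⟩
    exact dyadic_mem_Icc_floor (h x hx y hy)
  calc ((dyadic i '' T).ncard : ℝ) ≤ (Finset.Icc ⌊x * 2 ^ i - D⌋ ⌊x * 2 ^ i + D⌋).card := by
        rw [← ncard_coe_finset]
        exact Nat.cast_le.2 (ncard_le_ncard hsub (Finset.finite_toSet _))
    _ ≤ 2 * D + 2 := (card_Icc_floor_le (by linarith)).trans (by linarith)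

theorem exists_dyadic_scales {r R : ℝ} (hr : 0 < r) (hrR : r < R) {n : ℕ} (hn : 1 ≤ n) :
    ∃ (i : ℤ) (k : ℕ), R ≤ 2 ^ (-i) ∧ (2 : ℝ) ^ (-(i + (k * n : ℕ))) ≤ r ∧
      ((2 : ℝ) ^ n) ^ k ≤ 2 ^ (n + 1) * (R / r) := by
  obtain ⟨p, hpR, hRp⟩ := exists_mem_Ioc_zpow (hr.trans hrR) one_lt_two
  have hupper : (2 : ℝ) ^ (p + 1) ≤ 2 * R := by
    rw [zpow_add_one₀ two_ne_zero]
    linarith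
  obtain ⟨k, hk, hk'⟩ := exists_nat_pow_near (x := (2 : ℝ) ^ (p + 1) / r) (y := 2 ^ n)
    ((one_le_div hr).2 (hrR.le.trans hRp)) (one_lt_pow₀ one_lt_two (by lia))
  refine ⟨-(p + 1), k + 1, by rwa [neg_neg], ?_, ?_⟩
  · rw [neg_add, neg_neg, zpow_add₀ two_ne_zero, zpow_neg, zpow_natCast, mul_comm (k + 1), pow_mul,
      ← div_eq_mul_inv, div_le_iff₀ (by positivity), mul_comm, ← div_le_iff₀ hr]
    exact hk'.le
  · calc ((2 : ℝ) ^ n) ^ (k + 1) ≤ 2 ^ (p + 1) / r * 2 ^ n := by rw [pow_succ]; gcongr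
      _ ≤ 2 * R / r * 2 ^ n := by gcongr
      _ = 2 ^ (n + 1) * (R / r) := by ring

end Dyadic

section Branching

variable {X α : Type*}

/-- Inside `F`, each cell of generation `i` meets at most `ρ` cells of generation `i + n`. Only
finite subsets are tested, so that `Set.ncard` is never taken of an infinite set. -/
def BranchingBound (cell : ℤ → X → α) (F : Set X) (n : ℕ) (ρ : ℝ) : Prop :=
  ∀ i, ∀ T ⊆ F, T.Finite → (∀ x ∈ T, ∀ y ∈ T, cell i x = cell i y) →
    ((cell (i + n) '' T).ncard : ℝ) ≤ ρ

theorem ncard_image_le_of_cover {υ : Type*} {T : Set X} (g : X → α) (𝒰 : Finset υ)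
    (V : υ → Set X) (hcover : T ⊆ ⋃ U ∈ 𝒰, V U) {k : ℝ}
    (hk : ∀ U ∈ 𝒰, ((g '' (T ∩ V U)).ncard : ℝ) ≤ k) :
    ((g '' T).ncard : ℝ) ≤ 𝒰.card * k := by
  have himage : g '' T = ⋃ U ∈ 𝒰, g '' (T ∩ V U) := by
    rw [← image_iUnion₂, ← inter_iUnion₂, inter_eq_left.2 hcover]
  calc ((g '' T).ncard : ℝ) ≤ ∑ U ∈ 𝒰, ((g '' (T ∩ V U)).ncard : ℝ) := by
        rw [himage]
        exact_mod_cast Finset.set_ncard_biUnion_le 𝒰 _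
    _ ≤ 𝒰.card * k := by
        rw [← nsmul_eq_mul, ← Finset.sum_const]
        exact Finset.sum_le_sum hk

theorem BranchingBound.pow {cell : ℤ → X → α} {F : Set X} {n : ℕ} {ρ : ℝ}
    (h : BranchingBound cell F n ρ) (hρ : 0 ≤ ρ) (k : ℕ) :
    BranchingBound cell F (k * n) (ρ ^ k) := by
  induction k with
  | zero =>
    intro i T _ hT hcell
    rw [Nat.zero_mul, Nat.cast_zero, add_zero, pow_zero]
    refine Nat.cast_le_one.2 ((ncard_le_one (hT.image _)).2 ?_)
    rintro _ ⟨x, hx, rfl⟩ _ ⟨y, hy, rfl⟩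
    exact hcell x hx y hy
  | succ k ih =>
    intro i T hTF hT hcell
    have hlevel : i + ((k + 1) * n : ℕ) = (i + n) + (k * n : ℕ) := by push_cast; ring
    have hfin := hT.image (cell (i + n))
    rw [hlevel, pow_succ']
    calc _ ≤ hfin.toFinset.card * ρ ^ k := by
          refine ncard_image_le_of_cover _ hfin.toFinset (fun b => cell (i + n) ⁻¹' {b})
            (fun x hx => ?_) fun b _ => ?_
          · simp only [mem_iUnion]
            exact ⟨_, hfin.mem_toFinset.2 (mem_image_of_mem _ hx), rfl⟩
          · exact ih (i + n) _ (inter_subset_left.trans hTF) (hT.inter_of_left _)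
              fun x hx y hy => hx.2.trans hy.2.symm
      _ ≤ ρ * ρ ^ k := by
          rw [← ncard_eq_toFinset_card _ hfin]
          gcongr
          exact h i T hTF hT hcell

theorem branchingBound_dyadic (F : Set ℝ) (n : ℕ) : BranchingBound dyadic F n (2 ^ n) := by
  intro i T _ _ hcell
  rcases T.eq_empty_or_nonempty with rfl | ⟨x, hx⟩
  · rw [image_empty, ncard_empty, Nat.cast_zero]
    positivity
  have hsub : dyadic (i + n) '' T ⊆
      Finset.Ico ((2 ^ n : ℕ) * dyadic i x) ((2 ^ n : ℕ) * dyadic i x + (2 ^ n : ℕ)) := by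
    rintro _ ⟨y, hy, rfl⟩
    have hpos : (0 : ℤ) < (2 ^ n : ℕ) := by positivity
    rw [hcell x hx y hy, dyadic_eq_ediv i n y, Finset.coe_Ico, mem_Ico]
    have hdiv := Int.mul_ediv_add_emod (dyadic (i + n) y) ((2 ^ n : ℕ) : ℤ)
    have hnonneg := Int.emod_nonneg (dyadic (i + n) y) hpos.ne'
    have hlt := Int.emod_lt_of_pos (dyadic (i + n) y) hpos
    constructor <;> linarith
  have hcard := ncard_le_ncard hsub (Finset.finite_toSet _)
  rw [ncard_coe_finset, Int.card_Ico, add_sub_cancel_left, Int.toNat_natCast] at hcard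
  exact_mod_cast hcard

theorem CoverBound.branchingBound [PseudoMetricSpace X] {cell : ℤ → X → α} {F : Set X}
    {d C b D K : ℝ} (hcov : CoverBound F d C) (hC : 0 ≤ C) (hb : 0 < b) (hbD : b ≤ D) (hK : 0 ≤ K)
    (hdiam : ∀ i, ∀ x ∈ F, ∀ y ∈ F, cell i x = cell i y → dist x y ≤ D * (2 : ℝ) ^ (-i))
    (hmeet : ∀ i, ∀ T ⊆ F, T.Finite → (∀ x ∈ T, ∀ y ∈ T, dist x y ≤ b * (2 : ℝ) ^ (-i)) →
      ((cell i '' T).ncard : ℝ) ≤ K) (n : ℕ) :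
    BranchingBound cell F n (C * (2 * D / b) ^ d * K * 2 ^ (d * n)) := by
  intro i T hTF hT hcell
  have hD : 0 < D := hb.trans_le hbD
  rcases T.eq_empty_or_nonempty with rfl | ⟨x, hx⟩
  · rw [image_empty, ncard_empty, Nat.cast_zero]
    positivity
  have hscale : (0 : ℝ) < 2 ^ (-i) := by positivity
  have hlevel : (2 : ℝ) ^ (-(i + n : ℤ)) = 2 ^ (-i) / 2 ^ n := by
    rw [neg_add, zpow_add₀ two_ne_zero, zpow_neg _ (n : ℤ), zpow_natCast, div_eq_mul_inv]
  have hratio : 2 * D * 2 ^ (-i) / (b * (2 : ℝ) ^ (-(i + n : ℤ))) = 2 * D / b * 2 ^ n := by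
    rw [hlevel]
    field_simp
  have hlt : b * (2 : ℝ) ^ (-(i + n : ℤ)) < 2 * D * 2 ^ (-i) := by
    have hle : (2 : ℝ) ^ (-(i + n : ℤ)) ≤ 2 ^ (-i) := by
      rw [hlevel]
      exact div_le_self hscale.le (one_le_pow₀ one_le_two)
    nlinarith
  obtain ⟨𝒰, hcover, hsmall, hcard⟩ := hcov x (hTF hx) _ _ (by positivity) hlt
  rw [hratio, Real.mul_rpow (by positivity) (by positivity), ← Real.rpow_natCast,
    ← Real.rpow_mul two_pos.le, mul_comm (n : ℝ)] at hcard
  calc _ ≤ (𝒰.card : ℝ) * K := by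
        refine ncard_image_le_of_cover _ 𝒰 id (fun y hy => hcover ⟨hTF hy, ?_⟩) fun U hU => ?_
        · have hyx := hdiam i y (hTF hy) x (hTF hx) (hcell y hy x hx)
          rw [mem_closedBall]
          nlinarith
        · exact hmeet _ _ (inter_subset_left.trans hTF) (hT.inter_of_left _)
            fun y hy z hz => (ediam_le_ofReal_iff (by positivity)).1 (hsmall U hU) y hy.2 z hz.2
    _ ≤ C * ((2 * D / b) ^ d * 2 ^ (d * n)) * K := by gcongr
    _ = C * (2 * D / b) ^ d * K * 2 ^ (d * n) := by ring

theorem CoverBound.branchingBound_dyadic {F : Set ℝ} {d C : ℝ} (hcov : CoverBound F d C)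
    (hC : 0 ≤ C) (n : ℕ) : BranchingBound dyadic F n (C * 2 ^ d * 4 * 2 ^ (d * n)) := by
  have h := hcov.branchingBound (cell := dyadic) (b := 1) (D := 1) (K := 4) hC one_pos le_rfl
    (by norm_num) (fun i x _ y _ hxy => by
      rw [one_mul, Real.dist_eq]
      exact abs_sub_le_of_dyadic_eq hxy)
    (fun i T _ _ hT => (ncard_image_dyadic_le zero_le_one hT).trans_eq (by norm_num)) n
  simpa only [mul_one, div_one] using h

theorem coverBound_of_branchingBound_dyadic {F : Set ℝ} {s : ℝ} (hs : 0 ≤ s) {n : ℕ} (hn : 1 ≤ n)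
    (h : BranchingBound dyadic F n (2 ^ (s * n))) : CoverBound F s (4 * (2 ^ (n + 1)) ^ s) := by
  classical
  intro x _ r R hr hrR
  obtain ⟨i, k, hRi, hkr, hk⟩ := exists_dyadic_scales hr hrR hn
  set l : ℤ := i + (k * n : ℕ)
  have hball : ∀ y ∈ F ∩ closedBall x R, |x - y| ≤ 1 * (2 : ℝ) ^ (-i) := fun y hy => by
    rw [one_mul, ← Real.dist_eq, dist_comm]
    exact (mem_closedBall.1 hy.2).trans hRi
  obtain ⟨T, hTF, hTbij⟩ := exists_subset_bijOn (F ∩ closedBall x R) (dyadic l)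
  have hfin : (dyadic l '' (F ∩ closedBall x R)).Finite := by
    refine (finite_Icc ⌊(x - R) * 2 ^ l⌋ ⌊(x + R) * 2 ^ l⌋).subset ?_
    rintro _ ⟨y, ⟨-, hy⟩, rfl⟩
    rw [mem_closedBall, Real.dist_eq, abs_le] at hy
    exact ⟨Int.floor_le_floor (by gcongr; linarith), Int.floor_le_floor (by gcongr; linarith)⟩
  have hT : T.Finite := hTbij.finite_iff_finite.2 hfin
  refine ⟨hfin.toFinset.image fun b => dyadic l ⁻¹' {b}, fun y hy => ?_, fun U hU => ?_, ?_⟩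
  · simp only [mem_iUnion]
    exact ⟨_, Finset.mem_image_of_mem _ (hfin.mem_toFinset.2 (mem_image_of_mem _ hy)), rfl⟩
  · obtain ⟨c, -, rfl⟩ := Finset.mem_image.1 hU
    rw [ediam_le_ofReal_iff hr.le]
    exact fun a ha b hb => (abs_sub_le_of_dyadic_eq (ha.trans hb.symm)).trans hkr
  · calc _ ≤ ((dyadic l '' T).ncard : ℝ) := by
          rw [hTbij.image_eq, ncard_eq_toFinset_card _ hfin]
          exact Nat.cast_le.2 Finset.card_image_le
      _ ≤ (Finset.Icc ⌊x * 2 ^ i - 1⌋ ⌊x * 2 ^ i + 1⌋).card * (2 ^ (s * n)) ^ k := by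
          refine ncard_image_le_of_cover _ _ (fun b => dyadic i ⁻¹' {b}) (fun y hy => ?_)
            fun b _ => ?_
          · simp only [mem_iUnion]
            exact ⟨_, dyadic_mem_Icc_floor (hball y (hTF hy)), rfl⟩
          · exact h.pow (by positivity) k i _ (fun y hy => (hTF hy.1).1) (hT.inter_of_left _)
              fun y hy z hz => hy.2.trans hz.2.symm
      _ ≤ 4 * (2 ^ (n + 1) * (R / r)) ^ s := by
          have hpow : ((2 : ℝ) ^ (s * n)) ^ k = ((2 ^ n) ^ k) ^ s := by
            rw [mul_comm s, Real.rpow_mul two_pos.le, Real.rpow_natCast,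
              Real.rpow_pow_comm (by positivity) s k]
          rw [hpow]
          gcongr
          exact (card_Icc_floor_le (by linarith)).trans_eq (by ring)
      _ = 4 * (2 ^ (n + 1)) ^ s * (R / r) ^ s := by
          rw [Real.mul_rpow (by positivity) (div_pos (hr.trans hrR) hr).le, mul_assoc]

theorem exists_regular_of_lt_assouadDim {F : Set ℝ} {s : ℝ} (hs : 0 ≤ s) (hsF : s < assouadDim F)
    {n : ℕ} (hn : 1 ≤ n) : ∃ (i : ℤ) (T : Finset ℝ), ↑T ⊆ F ∧
      (∀ x ∈ T, ∀ y ∈ T, dyadic i x = dyadic i y) ∧ InjOn (dyadic (i + n)) T ∧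
      (2 : ℝ) ^ (s * n) ≤ T.card := by
  by_contra! hfew
  refine hsF.not_ge (assouadDim_le_of_coverBound hs (by positivity)
    (coverBound_of_branchingBound_dyadic hs hn fun i T hTF hT hcell => ?_))
  obtain ⟨u, huT, hbij⟩ := exists_subset_bijOn T (dyadic (i + n))
  have hu : u.Finite := hT.subset huT
  have hcard := hfew i hu.toFinset (by simpa using huT.trans hTF)
    (fun x hx y hy => hcell x (huT (hu.mem_toFinset.1 hx)) y (huT (hu.mem_toFinset.1 hy)))
    (by simpa using hbij.injOn)
  rw [← hbij.image_eq, hbij.injOn.ncard_image, ncard_eq_toFinset_card _ hu]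
  exact hcard.le

end Branching

section ChainCell

/-- The points of `S` that can be joined to `z` inside the closed `δ`-neighbourhood of `S`. For `z`
in `S` these sets partition `S` into clusters whose mutual gaps have length more than `2 δ`. -/
def chainCell (S : Set ℝ) (δ z : ℝ) : Set ℝ :=
  {w | w ∈ S ∧ ∀ x ∈ uIcc z w, ∃ v ∈ S, |x - v| ≤ δ}

variable {S : Set ℝ} {δ z z' : ℝ}

theorem chainCell_eq_iff (hδ : 0 ≤ δ) (hz' : z' ∈ S) :
    chainCell S δ z = chainCell S δ z' ↔ ∀ x ∈ uIcc z z', ∃ v ∈ S, |x - v| ≤ δ := by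
  refine ⟨fun h => ?_, fun h => ?_⟩
  · have hmem : z' ∈ chainCell S δ z' := by
      refine ⟨hz', fun x hx => ⟨z', hz', ?_⟩⟩
      rw [uIcc_self, mem_singleton_iff] at hx
      rwa [hx, sub_self, abs_zero]
    rw [← h] at hmem
    exact hmem.2
  · ext w
    refine ⟨fun ⟨hw, hjoin⟩ => ⟨hw, fun x hx => ?_⟩, fun ⟨hw, hjoin⟩ => ⟨hw, fun x hx => ?_⟩⟩
    · rcases uIcc_subset_uIcc_union_uIcc (b := z) hx with hx | hx
      · exact h x (by rwa [uIcc_comm])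
      · exact hjoin x hx
    · rcases uIcc_subset_uIcc_union_uIcc (b := z') hx with hx | hx
      · exact h x hx
      · exact hjoin x hx

theorem chainCell_eq_of_abs_sub_le (hz : z ∈ S) (hz' : z' ∈ S) (h : |z - z'| ≤ δ) :
    chainCell S δ z = chainCell S δ z' := by
  rw [chainCell_eq_iff ((abs_nonneg _).trans h) hz']
  refine fun x hx => ⟨z, hz, (abs_sub_left_of_mem_uIcc hx).trans ?_⟩
  rwa [abs_sub_comm]

theorem chainCell_nested {δ' : ℝ} (hδ' : 0 ≤ δ') (hδ : δ' ≤ δ) (hz' : z' ∈ S)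
    (h : chainCell S δ' z = chainCell S δ' z') : chainCell S δ z = chainCell S δ z' := by
  rw [chainCell_eq_iff hδ' hz'] at h
  rw [chainCell_eq_iff (hδ'.trans hδ) hz']
  intro x hx
  obtain ⟨v, hv, hxv⟩ := h x hx
  exact ⟨v, hv, hxv.trans hδ⟩

theorem abs_sub_le_card_mul_of_uIcc_subset {𝒰 : Finset (Set ℝ)} {r : ℝ} (hr : 0 ≤ r)
    (hdiam : ∀ U ∈ 𝒰, ediam U ≤ ENNReal.ofReal r)
    (hcover : uIcc z z' ⊆ ⋃ U ∈ 𝒰, cthickening r U) : |z - z'| ≤ 𝒰.card * (3 * r) := by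
  have hvolume : ∀ U ∈ 𝒰, volume (cthickening r U) ≤ ENNReal.ofReal (3 * r) := fun U hU => by
    have hthick := ediam_cthickening_le (s := U) r.toNNReal
    rw [Real.coe_toNNReal r hr] at hthick
    calc volume (cthickening r U) ≤ ediam U + 2 * ENNReal.ofReal r :=
          (Real.volume_le_diam _).trans hthick
      _ ≤ ENNReal.ofReal r + 2 * ENNReal.ofReal r := by gcongr; exact hdiam U hU
      _ = ENNReal.ofReal (3 * r) := by
          rw [ENNReal.ofReal_mul zero_le_three, ENNReal.ofReal_ofNat]
          ring
  have hsum : ENNReal.ofReal |z - z'| ≤ ENNReal.ofReal (𝒰.card * (3 * r)) :=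
    calc ENNReal.ofReal |z - z'| = volume (uIcc z z') := by rw [Real.volume_interval, abs_sub_comm]
      _ ≤ volume (⋃ U ∈ 𝒰, cthickening r U) := measure_mono hcover
      _ ≤ ∑ U ∈ 𝒰, volume (cthickening r U) := measure_biUnion_finset_le _ _
      _ ≤ ∑ _U ∈ 𝒰, ENNReal.ofReal (3 * r) := Finset.sum_le_sum hvolume
      _ = ENNReal.ofReal (𝒰.card * (3 * r)) := by
          rw [Finset.sum_const, nsmul_eq_mul, ENNReal.ofReal_mul (Nat.cast_nonneg _),
            ENNReal.ofReal_natCast]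
  exact (ENNReal.ofReal_le_ofReal_iff (by positivity)).1 hsum

theorem le_rpow_of_le_mul_rpow {q A d : ℝ} (hq : 0 < q) (hd : d < 1) (h : q ≤ A * q ^ d) :
    q ≤ A ^ (1 / (1 - d)) := by
  have hd' : 0 < 1 - d := sub_pos.2 hd
  have hA : q ^ (1 - d) ≤ A := by
    rwa [Real.rpow_sub hq, Real.rpow_one, div_le_iff₀ (by positivity)]
  calc q = (q ^ (1 - d)) ^ (1 / (1 - d)) := by
        rw [← Real.rpow_mul hq.le, mul_one_div_cancel hd'.ne', Real.rpow_one]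
    _ ≤ A ^ (1 / (1 - d)) := by gcongr

theorem CoverBound.abs_sub_le_of_chainCell_eq {d C : ℝ} (hS : CoverBound S d C) (hC : 0 ≤ C)
    (hd : d < 1) (hδ : 0 < δ) (hz : z ∈ S) (hz' : z' ∈ S)
    (h : chainCell S δ z = chainCell S δ z') :
    |z - z'| ≤ max 1 ((6 * C) ^ (1 / (1 - d))) * δ := by
  set D : ℝ := |z - z'| with hDdef
  rcases le_or_gt D δ with hDδ | hDδ
  · exact hDδ.trans (le_mul_of_one_le_left hδ.le (le_max_left _ _))
  rw [chainCell_eq_iff hδ.le hz'] at h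
  obtain ⟨𝒰, hcover, hdiam, hcard⟩ := hS z hz δ (2 * D) hδ (by linarith)
  have hthick : uIcc z z' ⊆ ⋃ U ∈ 𝒰, cthickening δ U := fun x hx => by
    obtain ⟨v, hv, hxv⟩ := h x hx
    have hvz : v ∈ closedBall z (2 * D) := by
      have hxz := abs_sub_left_of_mem_uIcc hx
      rw [abs_sub_comm z' z, ← hDdef] at hxz
      rw [mem_closedBall, Real.dist_eq]
      linarith [abs_sub_le v x z, abs_sub_comm v x]
    obtain ⟨U, hU, hvU⟩ := mem_iUnion₂.1 (hcover ⟨hv, hvz⟩)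
    exact mem_iUnion₂.2 ⟨U, hU, mem_cthickening_of_dist_le x v δ U hvU hxv⟩
  have hq : 0 < D / δ := div_pos (hδ.trans hDδ) hδ
  have hgrowth : D / δ ≤ 6 * C * (D / δ) ^ d := by
    rw [div_le_iff₀ hδ]
    calc D ≤ 𝒰.card * (3 * δ) := abs_sub_le_card_mul_of_uIcc_subset hδ.le hdiam hthick
      _ ≤ C * (2 ^ (1 : ℝ) * (D / δ) ^ d) * (3 * δ) := by
          rw [mul_div_assoc, Real.mul_rpow zero_le_two hq.le] at hcard
          refine mul_le_mul_of_nonneg_right (hcard.trans ?_) (by positivity)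
          gcongr
          exact one_le_two
      _ = 6 * C * (D / δ) ^ d * δ := by rw [Real.rpow_one]; ring
  exact (div_le_iff₀ hδ).1 ((le_rpow_of_le_mul_rpow hq hd hgrowth).trans (le_max_right _ _))

theorem CoverBound.branchingBound_chainCell {d C b D : ℝ} (hS : CoverBound S d C) (hC : 0 ≤ C)
    (hd : d < 1) (hb : 0 < b) (hD : max 1 ((6 * C) ^ (1 / (1 - d))) * b ≤ D) (n : ℕ) :
    BranchingBound (fun i => chainCell S (b * (2 : ℝ) ^ (-i))) S n
      (C * (2 * D / b) ^ d * 2 ^ (d * n)) := by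
  have hbD : b ≤ D := (le_mul_of_one_le_left hb.le (le_max_left _ _)).trans hD
  have h := hS.branchingBound (cell := fun i => chainCell S (b * (2 : ℝ) ^ (-i))) (K := 1)
    hC hb hbD zero_le_one (fun i x hx y hy hxy => ?_) (fun i T hTS hT hclose => ?_) n
  · simpa only [mul_one] using h
  · calc dist x y ≤ max 1 ((6 * C) ^ (1 / (1 - d))) * (b * (2 : ℝ) ^ (-i)) :=
          hS.abs_sub_le_of_chainCell_eq hC hd (by positivity) hx hy hxy
      _ ≤ D * (2 : ℝ) ^ (-i) := by rw [← mul_assoc]; gcongr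
  · refine Nat.cast_le_one.2 ((ncard_le_one (hT.image _)).2 ?_)
    rintro _ ⟨x, hx, rfl⟩ _ ⟨y, hy, rfl⟩
    exact chainCell_eq_of_abs_sub_le (hTS hx) (hTS hy) (hclose x hx y hy)

end ChainCell

section SeparatedTree

open scoped MeasureTheory

theorem measure_setOf_measure_fiber_eq_zero {X β : Type*} [MeasurableSpace X] [Countable β]
    (μ : Measure X) (G : Set X) (f : X → β) :
    μ {x ∈ G | μ {y ∈ G | f y = f x} = 0} = 0 := by
  have hcover : {x ∈ G | μ {y ∈ G | f y = f x} = 0} ⊆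
      ⋃ b ∈ {b | μ {y ∈ G | f y = b} = 0}, {y ∈ G | f y = b} := fun x hx =>
    mem_iUnion₂.2 ⟨f x, hx.2, hx.1, rfl⟩
  exact measure_mono_null hcover ((measure_biUnion_null_iff (to_countable _)).2 fun _ hb => hb)

theorem card_mul_rpow_le_pow {B τ : ℝ} (hB : 0 ≤ B) (κ w : ℕ) :
    ((Finset.Icc ⌊-B * 2 ^ w⌋ ⌊B * 2 ^ w⌋).card : ℝ) * (2 * (2 : ℝ) ^ (-((κ * w : ℕ) : ℤ))) ^ τ ≤
      (2 * B + 2) * 2 ^ τ * ((2 : ℝ) ^ (1 - κ * τ)) ^ w := by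
  have hpow : (2 * (2 : ℝ) ^ (-((κ * w : ℕ) : ℤ))) ^ τ = 2 ^ τ * 2 ^ (-(κ * w * τ)) := by
    rw [Real.mul_rpow two_pos.le (by positivity), ← Real.rpow_intCast, ← Real.rpow_mul two_pos.le]
    push_cast
    ring_nf
  have hratio : ((2 : ℝ) ^ (1 - κ * τ)) ^ w = 2 ^ w * 2 ^ (-(κ * w * τ)) := by
    rw [← Real.rpow_natCast, ← Real.rpow_mul two_pos.le, ← Real.rpow_natCast,
      ← Real.rpow_add two_pos]
    ring_nf
  have hcard : ((Finset.Icc ⌊-B * 2 ^ w⌋ ⌊B * 2 ^ w⌋).card : ℝ) ≤ (2 * B + 2) * 2 ^ w := by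
    have hone : (1 : ℝ) ≤ 2 ^ w := one_le_pow₀ one_le_two
    have hle : -B * 2 ^ w ≤ B * 2 ^ w := by gcongr; linarith
    linarith [card_Icc_floor_le hle]
  rw [hpow, hratio]
  calc _ ≤ (2 * B + 2) * 2 ^ w * (2 ^ τ * 2 ^ (-(κ * w * τ))) := by gcongr
    _ = _ := by ring

theorem hausdorffMeasure_eq_zero_of_tendsto {X ι : Type*} [MetricSpace X] [MeasurableSpace X]
    [BorelSpace X] {G : Set X} {τ : ℝ} (hτ : 0 ≤ τ) {r : ℕ → ℝ} (hr : ∀ k, 0 < r k)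
    (hr0 : Tendsto r atTop (𝓝 0)) (K : ℕ → Finset ι) (U : ℕ → ι → Set X)
    (hdiam : ∀ k, ∀ l ∈ K k, ediam (U k l) ≤ ENNReal.ofReal (r k))
    (hcover : ∀ k, G ⊆ ⋃ l ∈ K k, U k l)
    (hsum : Tendsto (fun k => (K k).card * r k ^ τ) atTop (𝓝 0)) : μH[τ] G = 0 := by
  have hr0' : Tendsto (fun k => ENNReal.ofReal (r k)) atTop (𝓝 0) := by
    simpa only [ENNReal.ofReal_zero] using ENNReal.tendsto_ofReal hr0
  have hsum' : Tendsto (fun k => ENNReal.ofReal ((K k).card * r k ^ τ)) atTop (𝓝 0) := by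
    simpa only [ENNReal.ofReal_zero] using ENNReal.tendsto_ofReal hsum
  refine le_antisymm ((Measure.hausdorffMeasure_le_liminf_sum τ G _ hr0'
    (fun k (l : K k) => U k l) (.of_forall fun k l => hdiam k l l.2)
    (.of_forall fun k =>
      (hcover k).trans_eq (iUnion_subtype (· ∈ K k) fun l => U k l).symm)).trans ?_) zero_le
  refine (tendsto_of_tendsto_of_tendsto_of_le_of_le tendsto_const_nhds hsum'
    (fun _ => zero_le) fun k => ?_).liminf_eq.le
  calc _ ≤ ∑ _l : K k, ENNReal.ofReal (r k) ^ τ :=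
        Finset.sum_le_sum fun l _ => ENNReal.rpow_le_rpow (hdiam k l l.2) hτ
    _ = ENNReal.ofReal ((K k).card * r k ^ τ) := by
        rw [Finset.sum_const, nsmul_eq_mul, ENNReal.ofReal_rpow_of_pos (hr k),
          ENNReal.ofReal_mul (by positivity), Finset.card_univ, Fintype.card_coe,
          ENNReal.ofReal_natCast]

theorem hausdorffMeasure_eq_zero_of_dyadic {G : Set ℝ} {τ B : ℝ} (hB : 0 ≤ B)
    (hGB : ∀ x ∈ G, |x| ≤ B) {κ : ℕ} (hκ : 1 < κ * τ) {w : ℕ → ℕ} (hw : Tendsto w atTop atTop)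
    (hG : ∀ k, ∀ x ∈ G, ∀ y ∈ G, dyadic (w k) x = dyadic (w k) y →
      |x - y| ≤ 2 * (2 : ℝ) ^ (-((κ * w k : ℕ) : ℤ))) : μH[τ] G = 0 := by
  have hκ0 : 0 < κ := Nat.pos_of_ne_zero fun h => by norm_num [h] at hκ
  have hτ : 0 < τ := pos_of_mul_pos_right (zero_lt_one.trans hκ) (Nat.cast_nonneg κ)
  refine hausdorffMeasure_eq_zero_of_tendsto hτ.le
    (r := fun k => 2 * (2 : ℝ) ^ (-((κ * w k : ℕ) : ℤ))) (fun k => by positivity) ?_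
    (fun k => Finset.Icc ⌊-B * 2 ^ w k⌋ ⌊B * 2 ^ w k⌋)
    (fun k l => {x ∈ G | dyadic (w k) x = l}) (fun k l _ => ?_) (fun k x hx => ?_) ?_
  · have hpow := ((tendsto_pow_atTop_nhds_zero_of_lt_one (r := (1 / 2 : ℝ)) (by norm_num)
      (by norm_num)).comp (hw.const_mul_atTop' hκ0)).const_mul 2
    rw [mul_zero] at hpow
    refine hpow.congr fun k => ?_
    rw [Function.comp_apply, zpow_neg, zpow_natCast, one_div_pow, one_div]
  · exact (ediam_le_ofReal_iff (by positivity)).2 fun x hx y hy =>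
      hG k x hx.1 y hy.1 (hx.2.trans hy.2.symm)
  · have hxB := abs_le.1 (hGB x hx)
    refine mem_iUnion₂.2 ⟨dyadic (w k) x, Finset.mem_Icc.2 ?_, hx, rfl⟩
    rw [dyadic, zpow_natCast]
    constructor <;> refine Int.floor_le_floor ?_ <;> gcongr <;> linarith
  · have hpow := ((tendsto_pow_atTop_nhds_zero_of_lt_one (by positivity)
      (Real.rpow_lt_one_of_one_lt_of_neg one_lt_two (sub_neg.2 hκ))).comp hw).const_mul
        ((2 * B + 2) * 2 ^ τ)
    rw [mul_zero] at hpow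
    exact tendsto_of_tendsto_of_tendsto_of_le_of_le tendsto_const_nhds hpow
      (fun k => by positivity) fun k => card_mul_rpow_le_pow hB κ (w k)

/-- Otherwise, at infinitely many scales `w`, the dyadic intervals of generation `κ w` charged by
`G` would lie next to each other inside each interval of generation `w`, so that `G` would have
dimension at most `1 / κ`. -/
theorem exists_separated_subsets {G : Set ℝ} {τ B : ℝ} (hG : μH[τ] G ≠ 0)
    (hGB : ∀ x ∈ G, |x| ≤ B) {κ : ℕ} (hκ : 1 < κ * τ) :
    ∃ w₀ : ℕ, ∀ w ≥ w₀, ∃ G' ⊆ G, ∃ G'' ⊆ G, μH[τ] G' ≠ 0 ∧ μH[τ] G'' ≠ 0 ∧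
      ∀ x ∈ G', ∀ y ∈ G'', (2 : ℝ) ^ (-((κ * w : ℕ) : ℤ)) ≤ |x - y| ∧
        |x - y| ≤ (2 : ℝ) ^ (-(w : ℤ)) := by
  obtain ⟨x₀, hx₀⟩ := nonempty_of_measure_ne_zero hG
  by_contra! hbad
  choose w hw hbad using hbad
  set piece : ℕ → ℝ → Set ℝ :=
    fun k x => {y ∈ G | dyadic ((κ * w k : ℕ) : ℤ) y = dyadic ((κ * w k : ℕ) : ℤ) x}
  set light : ℕ → Set ℝ := fun k => {x ∈ G | μH[τ] (piece k x) = 0}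
  have hlight : μH[τ] (⋃ k, light k) = 0 :=
    measure_iUnion_null fun _ => measure_setOf_measure_fiber_eq_zero _ _ _
  have hheavy : ∀ k, ∀ x ∈ G \ ⋃ k, light k, μH[τ] (piece k x) ≠ 0 := fun k x hx hnull =>
    hx.2 (mem_iUnion.2 ⟨k, hx.1, hnull⟩)
  refine hG (measure_mono_null (sdiff_union_self.symm ▸ subset_union_left) (measure_union_null
    (hausdorffMeasure_eq_zero_of_dyadic ((abs_nonneg _).trans (hGB x₀ hx₀))
      (fun x hx => hGB x hx.1) hκ (tendsto_atTop_mono hw tendsto_id) fun k x hx y hy hxy => ?_)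
    hlight))
  refine abs_sub_le_of_abs_dyadic_sub_le_one (Int.lt_add_one_iff.1 (lt_of_not_ge fun hfar => ?_))
  obtain ⟨x', hx', y', hy', hlt⟩ := hbad k (piece k x) (sep_subset _ _) (piece k y)
    (sep_subset _ _) (hheavy k x hx) (hheavy k y hy)
  have hκ0 : 0 < κ := Nat.pos_of_ne_zero fun h => by norm_num [h] at hκ
  have hle : (w k : ℤ) ≤ (κ * w k : ℕ) := Int.ofNat_le.2 (Nat.le_mul_of_pos_left _ hκ0)
  refine (hlt (zpow_neg_le_abs_sub_of_two_le (by rwa [hx'.2, hy'.2]))).not_ge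
    (abs_sub_le_of_dyadic_eq ?_)
  rw [dyadic_nested hle hx'.2, dyadic_nested hle hy'.2, hxy]

/-- Scales that are at least `W`, multiples of `m`, and multiples of `1 + κ` times the previous
scale. -/
structure ScaleSequence (κ m W : ℕ) (w : ℕ → ℕ) : Prop where
  le (i : ℕ) : W ≤ w i
  dvd (i : ℕ) : m ∣ w i
  dvd_succ (i : ℕ) : (1 + κ) * w i ∣ w (i + 1)

/-- A family of sets indexed by the leaves of a binary tree of depth `I`, such that the sets of two
leaves differing in the single digit `i` are at distance between `2 ^ (-κ w i)` and
`2 ^ (-w i)`. -/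
def SeparatedFamily (κ : ℕ) (w : ℕ → ℕ) {I : ℕ} (G : (Fin I → Bool) → Set ℝ) : Prop :=
  ∀ (i : Fin I) (σ : Fin I → Bool), ∀ x ∈ G σ, ∀ y ∈ G (Function.update σ i (!σ i)),
    (2 : ℝ) ^ (-((κ * w i : ℕ) : ℤ)) ≤ |x - y| ∧ |x - y| ≤ (2 : ℝ) ^ (-(w i : ℤ))

theorem exists_scaleSequence (κ : ℕ) {m W : ℕ} (hm : 0 < m) (hW : 0 < W) :
    ∃ w, ScaleSequence κ m W w :=
  ⟨fun i => W * m * (1 + κ) ^ i, fun i => Nat.le_of_dvd (by positivity) ⟨m * (1 + κ) ^ i, by ring⟩,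
    fun i => ⟨W * (1 + κ) ^ i, by ring⟩, fun i => ⟨1, by ring⟩⟩

theorem ScaleSequence.mul_tail {κ m W : ℕ} {w : ℕ → ℕ} (h : ScaleSequence κ m W w) (I : ℕ) {t : ℕ}
    (ht : 0 < t) : ScaleSequence κ m W fun i => if i < I then w i else w i * t where
  le i := by
    split_ifs
    exacts [h.le i, (h.le i).trans (Nat.le_mul_of_pos_right _ ht)]
  dvd i := by
    split_ifs
    exacts [h.dvd i, (h.dvd i).mul_right _]
  dvd_succ i := by
    split_ifs with hi hi'
    · exact h.dvd_succ i
    · exact (h.dvd_succ i).mul_right _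
    · lia
    · rw [← mul_assoc]
      exact Nat.mul_dvd_mul_right (h.dvd_succ i) t

theorem SeparatedFamily.snoc {κ I : ℕ} {w w' : ℕ → ℕ} {G G' G'' : (Fin I → Bool) → Set ℝ}
    (h : SeparatedFamily κ w G) (hw : ∀ i < I, w' i = w i) (hG' : ∀ σ, G' σ ⊆ G σ)
    (hG'' : ∀ σ, G'' σ ⊆ G σ)
    (hcross : ∀ σ, ∀ x ∈ G' σ, ∀ y ∈ G'' σ, (2 : ℝ) ^ (-((κ * w' I : ℕ) : ℤ)) ≤ |x - y| ∧
      |x - y| ≤ (2 : ℝ) ^ (-(w' I : ℤ))) :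
    SeparatedFamily κ w' fun σ : Fin (I + 1) → Bool =>
      if σ (Fin.last I) then G'' (Fin.init σ) else G' (Fin.init σ) := by
  intro i
  refine Fin.lastCases ?_ (fun i => ?_) i
  · intro σ x hx y hy
    simp only [Function.update_self, Fin.init_update_last, Fin.val_last] at hx hy ⊢
    cases hσ : σ (Fin.last I) with
    | false =>
      rw [hσ] at hx hy
      exact hcross _ x (by simpa using hx) y (by simpa using hy)
    | true =>
      rw [hσ] at hx hy
      rw [abs_sub_comm]
      exact hcross _ y (by simpa using hy) x (by simpa using hx)
  · intro σ x hx y hy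
    have hsub : ∀ σ : Fin (I + 1) → Bool,
        (if σ (Fin.last I) then G'' (Fin.init σ) else G' (Fin.init σ)) ⊆ G (Fin.init σ) := by
      intro σ
      split_ifs
      exacts [hG'' _, hG' _]
    have hy' := hsub _ hy
    rw [Fin.init_update_castSucc] at hy'
    rw [Fin.val_castSucc, hw i i.2]
    exact h i _ x (hsub _ hx) y hy'

theorem exists_separatedFamily {F : Set ℝ} {τ B : ℝ} (hF : μH[τ] F ≠ 0)
    (hFB : ∀ x ∈ F, |x| ≤ B) {κ : ℕ} (hκ : 1 < κ * τ) {m W : ℕ} (hm : 0 < m) (hW : 0 < W) (I : ℕ) :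
    ∃ w, ScaleSequence κ m W w ∧ ∃ G : (Fin I → Bool) → Set ℝ, SeparatedFamily κ w G ∧
      ∀ σ, G σ ⊆ F ∧ μH[τ] (G σ) ≠ 0 := by
  induction I with
  | zero =>
    obtain ⟨w, hw⟩ := exists_scaleSequence κ hm hW
    exact ⟨w, hw, fun _ => F, fun i => i.elim0, fun _ => ⟨Subset.rfl, hF⟩⟩
  | succ I ih =>
    obtain ⟨w, hw, G, hsep, hG⟩ := ih
    choose w₀ hw₀ using fun σ => exists_separated_subsets (hG σ).2
      (fun x hx => hFB x ((hG σ).1 hx)) hκ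
    obtain ⟨t, ht, hw₀t⟩ : ∃ t > 0, ∀ σ, w₀ σ ≤ t := ⟨∑ σ, w₀ σ + 1, Nat.succ_pos _, fun σ =>
      (Finset.single_le_sum (fun _ _ => Nat.zero_le _) (Finset.mem_univ σ)).trans (Nat.le_succ _)⟩
    have hlarge : ∀ σ, w₀ σ ≤ w I * t := fun σ =>
      (hw₀t σ).trans (Nat.le_mul_of_pos_left _ (hW.trans_le (hw.le I)))
    choose G' hG' G'' hG'' hpos' hpos'' hcross using fun σ => hw₀ σ (w I * t) (hlarge σ)
    refine ⟨_, hw.mul_tail I ht, _,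
      hsep.snoc (fun i hi => if_pos hi) hG' hG'' (by simpa using hcross), fun σ => ?_⟩
    split_ifs
    exacts [⟨(hG'' _).trans (hG _).1, hpos'' _⟩, ⟨(hG' _).trans (hG _).1, hpos' _⟩]

end SeparatedTree

section CellSystem

theorem condEntropy_dyadic_le {Ω β : Type*} {s : Finset Ω} {f : Ω → ℝ} {A : Ω → β} {i : ℤ} {D : ℝ}
    (hD : 0 ≤ D) (h : ∀ p ∈ s, ∀ q ∈ s, A p = A q → |f p - f q| ≤ D * (2 : ℝ) ^ (-i)) :
    condEntropy s (fun p => dyadic i (f p)) A ≤ s.card * Real.log (2 * D + 2) := by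
  classical
  refine condEntropy_le_card_mul_log s _ A fun a => ?_
  rw [← image_image (dyadic i) f]
  refine ncard_image_dyadic_le hD ?_
  rintro _ ⟨p, hp, rfl⟩ _ ⟨q, hq, rfl⟩
  rw [Finset.mem_coe, Finset.mem_filter] at hp hq
  exact h p hp.1 q hq.1 (hp.2.trans hq.2.symm)

theorem BranchingBound.condEntropy_le {X Ω β γ : Type*} {cell : ℤ → X → γ} {F : Set X} {n : ℕ}
    {ρ : ℝ} (hcell : BranchingBound cell F n ρ) {s : Finset Ω} {f : Ω → X} {A : Ω → β} {i : ℤ}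
    (hf : MapsTo f s F) (hA : Determines s A fun p => cell i (f p)) :
    condEntropy s (fun p => cell (i + n) (f p)) A ≤ s.card * Real.log ρ := by
  classical
  refine condEntropy_le_card_mul_log s _ A fun a => ?_
  rw [← image_image (cell (i + n)) f]
  refine hcell i _ ?_ ((Finset.finite_toSet _).image f) ?_
  · exact (hf.mono_left (Finset.coe_subset.2 (Finset.filter_subset _ s))).image_subset
  · rintro _ ⟨p, hp, rfl⟩ _ ⟨q, hq, rfl⟩
    rw [Finset.mem_coe, Finset.mem_filter] at hp hq
    exact hA p hp.1 q hq.1 (hp.2.trans hq.2.symm)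

theorem BranchingBound.entropy_le {X Ω γ : Type*} {cell : ℤ → X → γ} {F : Set X} {n : ℕ} {ρ : ℝ}
    (hcell : BranchingBound cell F n ρ) {s : Finset Ω} {f : Ω → X} {i : ℤ} (hf : MapsTo f s F)
    (heq : ∀ p ∈ s, ∀ q ∈ s, cell i (f p) = cell i (f q)) :
    entropy s (fun p => cell (i + n) (f p)) ≤ s.card * Real.log ρ := by
  refine entropy_le_card_mul_log s _ ?_
  rw [← image_image (cell (i + n)) f]
  refine hcell i _ hf.image_subset ((Finset.finite_toSet _).image f) ?_
  rintro _ ⟨p, hp, rfl⟩ _ ⟨q, hq, rfl⟩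
  exact heq p hp q hq

/-- The pair of dyadic intervals of level `i` containing the coordinates of `p`. -/
def dyadicSquare (i : ℤ) (p : ℝ × ℝ) : ℤ × ℤ := (dyadic i p.1, dyadic i p.2)

theorem dyadicSquare_nested {i i' : ℤ} (h : i ≤ i') {p q : ℝ × ℝ}
    (hpq : dyadicSquare i' p = dyadicSquare i' q) : dyadicSquare i p = dyadicSquare i q := by
  rw [dyadicSquare, dyadicSquare, Prod.mk.injEq] at hpq
  exact Prod.ext (dyadic_nested h hpq.1) (dyadic_nested h hpq.2)

/-- Nested partitions of `E * F + F`, one for each dyadic scale `2 ^ (-i)`, with cells of diameter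
at most `D` times the scale which do not separate points at distance `1 + B` times the scale, where
`B` bounds `E`, and whose numbers of subcells have growth exponent `d`. The distance `1 + B` is the
one for which a dyadic square of side `2 ^ (-i)` projects into a single cell. -/
structure CellSystem (E F : Set ℝ) (d : ℝ) where
  cell : ℤ → ℝ → Set ℝ
  B : ℝ
  D : ℝ
  C : ℝ
  B_nonneg : 0 ≤ B
  le_D : 1 + B ≤ D
  C_pos : 0 < C
  abs_le : ∀ e ∈ E, |e| ≤ B
  cell_eq : ∀ i, ∀ z ∈ E * F + F, ∀ z' ∈ E * F + F, |z - z'| ≤ (1 + B) * (2 : ℝ) ^ (-i) →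
    cell i z = cell i z'
  nested : ∀ i i', i ≤ i' → ∀ z ∈ E * F + F, ∀ z' ∈ E * F + F, cell i' z = cell i' z' →
    cell i z = cell i z'
  abs_sub_le : ∀ i, ∀ z ∈ E * F + F, ∀ z' ∈ E * F + F, cell i z = cell i z' →
    |z - z'| ≤ D * (2 : ℝ) ^ (-i)
  branching : ∀ n : ℕ, BranchingBound cell (E * F + F) n (C * 2 ^ (d * n))

namespace CellSystem

variable {E F : Set ℝ} {d : ℝ} (𝒞 : CellSystem E F d)

theorem D_pos : 0 < 𝒞.D := by linarith [𝒞.B_nonneg, 𝒞.le_D]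

/-- The cell of level `i` containing the image of `p` under the projection of slope `e`. -/
def proj (e : ℝ) (i : ℤ) (p : ℝ × ℝ) : Set ℝ := 𝒞.cell i (e * p.1 + p.2)

/-- The information on the dyadic square of level `b` which the projection of slope `e` gains
between the levels `i` and `i'`. -/
def infoIncrement (s : Finset (ℝ × ℝ)) (e : ℝ) (b i i' : ℤ) : ℝ :=
  condEntropy s (dyadicSquare b) (𝒞.proj e i) - condEntropy s (dyadicSquare b) (𝒞.proj e i')

end CellSystem

theorem mul_fst_add_snd_mem {E F : Set ℝ} {e : ℝ} (he : e ∈ E) {p : ℝ × ℝ} (hp : p ∈ F ×ˢ F) :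
    e * p.1 + p.2 ∈ E * F + F :=
  add_mem_add (mul_mem_mul he hp.1) hp.2

namespace CellSystem

variable {E F : Set ℝ} {d : ℝ} (𝒞 : CellSystem E F d) {s : Finset (ℝ × ℝ)} {e e' : ℝ}

theorem determines_proj_of_le (hs : (s : Set (ℝ × ℝ)) ⊆ F ×ˢ F) (he : e ∈ E) {i i' : ℤ}
    (hi : i ≤ i') : Determines s (𝒞.proj e i') (𝒞.proj e i) := fun _ hp _ hq =>
  𝒞.nested i i' hi _ (mul_fst_add_snd_mem he (hs hp)) _ (mul_fst_add_snd_mem he (hs hq))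

theorem determines_proj_of_dyadicSquare (hs : (s : Set (ℝ × ℝ)) ⊆ F ×ˢ F) (he : e ∈ E) (i : ℤ) :
    Determines s (dyadicSquare i) (𝒞.proj e i) := by
  intro p hp q hq hpq
  rw [dyadicSquare, dyadicSquare, Prod.mk.injEq] at hpq
  refine 𝒞.cell_eq i _ (mul_fst_add_snd_mem he (hs hp)) _ (mul_fst_add_snd_mem he (hs hq)) ?_
  calc |e * p.1 + p.2 - (e * q.1 + q.2)| = |e * (p.1 - q.1) + (p.2 - q.2)| := by ring_nf
    _ ≤ |e| * |p.1 - q.1| + |p.2 - q.2| := (abs_add_le _ _).trans_eq (by rw [abs_mul])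
    _ ≤ 𝒞.B * 2 ^ (-i) + 2 ^ (-i) :=
      add_le_add (mul_le_mul (𝒞.abs_le e he) (abs_sub_le_of_dyadic_eq hpq.1) (abs_nonneg _)
        𝒞.B_nonneg) (abs_sub_le_of_dyadic_eq hpq.2)
    _ = (1 + 𝒞.B) * 2 ^ (-i) := by ring

theorem abs_sub_le_of_proj_eq (hs : (s : Set (ℝ × ℝ)) ⊆ F ×ˢ F) (he : e ∈ E) {i : ℤ} {p q : ℝ × ℝ}
    (hp : p ∈ s) (hq : q ∈ s) (hpq : 𝒞.proj e i p = 𝒞.proj e i q) :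
    |e * p.1 + p.2 - (e * q.1 + q.2)| ≤ 𝒞.D * 2 ^ (-i) :=
  𝒞.abs_sub_le i _ (mul_fst_add_snd_mem he (hs hp)) _ (mul_fst_add_snd_mem he (hs hq)) hpq

theorem proj_eq_of_proj_eq (hs : (s : Set (ℝ × ℝ)) ⊆ F ×ˢ F) (he : e ∈ E) (he' : e' ∈ E) {i : ℤ}
    {m : ℕ} (hm : 𝒞.D + 1 ≤ 2 ^ m) {p q : ℝ × ℝ} (hp : p ∈ s) (hq : q ∈ s)
    (hpq : 𝒞.proj e i p = 𝒞.proj e i q) (hslope : |(e' - e) * (p.1 - q.1)| ≤ (2 : ℝ) ^ (-i)) :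
    𝒞.proj e' (i - m) p = 𝒞.proj e' (i - m) q := by
  refine 𝒞.cell_eq _ _ (mul_fst_add_snd_mem he' (hs hp)) _ (mul_fst_add_snd_mem he' (hs hq)) ?_
  have hB := 𝒞.B_nonneg
  have hD := 𝒞.D_pos.le
  calc |e' * p.1 + p.2 - (e' * q.1 + q.2)|
      = |(e * p.1 + p.2 - (e * q.1 + q.2)) + (e' - e) * (p.1 - q.1)| := by ring_nf
    _ ≤ 𝒞.D * 2 ^ (-i) + 2 ^ (-i) :=
      (abs_add_le _ _).trans (add_le_add (𝒞.abs_sub_le_of_proj_eq hs he hp hq hpq) hslope)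
    _ = 1 * ((𝒞.D + 1) * 2 ^ (-i)) := by ring
    _ ≤ (1 + 𝒞.B) * (2 ^ m * 2 ^ (-i)) := by gcongr; linarith
    _ = (1 + 𝒞.B) * 2 ^ (-(i - m)) := by
      rw [neg_sub, sub_eq_add_neg, zpow_add₀ two_ne_zero, zpow_natCast]

theorem infoIncrement_nonneg (hs : (s : Set (ℝ × ℝ)) ⊆ F ×ˢ F) (he : e ∈ E) (b : ℤ) {i i' : ℤ}
    (hi : i ≤ i') : 0 ≤ 𝒞.infoIncrement s e b i i' :=
  sub_nonneg.2 (condEntropy_anti s _ (𝒞.determines_proj_of_le hs he hi))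

end CellSystem

end CellSystem

section PairEstimate

theorem condEntropy_eq_add_of_determines {Ω α β γ : Type*} {s : Finset Ω} {f : Ω → α} {g : Ω → β}
    (A : Ω → γ) (hfg : Determines s f g) :
    condEntropy s f A = condEntropy s f (fun p => (g p, A p)) + condEntropy s g A := by
  have hpair : entropy s (fun p => (f p, A p)) = entropy s (fun p => (f p, g p, A p)) :=
    entropy_congr (fun _ _ _ _ h => by simp_all) fun p hp q hq h => by
      have := hfg p hp q hq; simp_all
  rw [condEntropy, condEntropy, condEntropy, hpair]
  ring

theorem sum_range_shift_three_le {g : ℕ → ℝ} (hg : Antitone g) (T : ℕ) :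
    ∑ t ∈ Finset.range T, (g t - g (t + 3)) ≤ 3 * (g 0 - g (T + 2)) := by
  have htelescope : ∑ t ∈ Finset.range T, (g t - g (t + 3)) =
      (g 0 - g T) + (g 1 - g (T + 1)) + (g 2 - g (T + 2)) := by
    induction T with
    | zero => simp
    | succ T ih => rw [Finset.sum_range_succ, ih]; ring
  linarith [hg (show 0 ≤ 1 by lia), hg (show 0 ≤ 2 by lia), hg (show T ≤ T + 2 by lia),
    hg (show T + 1 ≤ T + 2 by lia)]

namespace CellSystem

variable {E F : Set ℝ} {d : ℝ} (𝒞 : CellSystem E F d) {s : Finset (ℝ × ℝ)} {e e₀ e₁ : ℝ} {v : ℤ}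

theorem determines_dyadic_of_dyadicSquare {i b : ℤ} (hi : i ≤ b) :
    Determines s (dyadicSquare b) fun p => dyadic i p.1 := fun _ _ _ _ hpq =>
  dyadic_nested hi (congrArg Prod.fst hpq)

theorem determines_proj_of_dyadic_proj (hs : (s : Set (ℝ × ℝ)) ⊆ F ×ˢ F) (he₀ : e₀ ∈ E)
    (he₁ : e₁ ∈ E) {m : ℕ} (hm : 𝒞.D + 1 ≤ 2 ^ m) (hv : |e₁ - e₀| ≤ (2 : ℝ) ^ (-v)) {a i : ℤ}
    (hi : i ≤ a + v) :
    Determines s (fun p => (dyadic a p.1, 𝒞.proj e₀ i p)) (𝒞.proj e₁ (i - m)) := by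
  intro p hp q hq hpq
  rw [Prod.mk.injEq] at hpq
  refine 𝒞.proj_eq_of_proj_eq hs he₀ he₁ hm hp hq hpq.2 ?_
  calc |(e₁ - e₀) * (p.1 - q.1)| ≤ 2 ^ (-v) * 2 ^ (-a) := by
        rw [abs_mul]
        exact mul_le_mul hv (abs_sub_le_of_dyadic_eq hpq.1) (abs_nonneg _) (by positivity)
    _ ≤ 2 ^ (-i) := by
        rw [← zpow_add₀ two_ne_zero]
        exact zpow_le_zpow_right₀ one_le_two (by lia)

theorem abs_rescaled_sub_le (hs : (s : Set (ℝ × ℝ)) ⊆ F ×ˢ F) (he : e ∈ E) {θ : ℝ}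
    (hv : (2 : ℝ) ^ (-v - 1) < |θ|) {a i : ℤ} {w : ℕ} (hi : a + v ≤ i + w) {p q : ℝ × ℝ}
    (hp : p ∈ s) (hq : q ∈ s) (hpq : 𝒞.proj e i p = 𝒞.proj e i q) :
    |(e * p.1 + p.2) * (2 ^ a / θ) - (e * q.1 + q.2) * (2 ^ a / θ)| ≤ 2 * 𝒞.D * 2 ^ w := by
  have hD := 𝒞.D_pos.le
  have hθ : 0 < |θ| := lt_trans (by positivity) hv
  have h2a : (0 : ℝ) < 2 ^ a := by positivity
  rw [← sub_mul, abs_mul, abs_div, abs_of_pos h2a, ← mul_div_assoc, div_le_iff₀ hθ]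
  calc |e * p.1 + p.2 - (e * q.1 + q.2)| * 2 ^ a
      ≤ 𝒞.D * 2 ^ (-i) * 2 ^ a := by gcongr; exact 𝒞.abs_sub_le_of_proj_eq hs he hp hq hpq
    _ = 𝒞.D * 2 ^ (-i + a) := by rw [mul_assoc, zpow_add₀ two_ne_zero]
    _ ≤ 𝒞.D * 2 ^ (1 + w + (-v - 1)) :=
      mul_le_mul_of_nonneg_left (zpow_le_zpow_right₀ one_le_two (by lia)) hD
    _ = 2 * 𝒞.D * 2 ^ w * 2 ^ (-v - 1) := by
      rw [zpow_add₀ two_ne_zero, zpow_add₀ two_ne_zero, zpow_one, zpow_natCast]; ring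
    _ ≤ 2 * 𝒞.D * 2 ^ w * |θ| := by gcongr

/-- The data conditioned on when the digits of `p.1` between the dyadic levels `a - m` and `a` are
read off from projections of slopes at distance about `2 ^ (-v)`. -/
def blockData (e : ℝ) (v : ℤ) (m : ℕ) (a : ℤ) (p : ℝ × ℝ) : ℤ × Set ℝ :=
  (dyadic (a - m) p.1, 𝒞.proj e (a + v - 2 * m) p)

theorem determines_proj_of_blockData (hs : (s : Set (ℝ × ℝ)) ⊆ F ×ˢ F) (he₀ : e₀ ∈ E) (he₁ : e₁ ∈ E)
    {m : ℕ} (hm : 𝒞.D + 1 ≤ 2 ^ m) (hv : |e₁ - e₀| ≤ (2 : ℝ) ^ (-v)) (a : ℤ) :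
    Determines s (𝒞.blockData e₁ v m a) (𝒞.proj e₀ (a + v - 3 * m)) := by
  rw [show a + v - 3 * m = a + v - 2 * m - m by ring]
  exact 𝒞.determines_proj_of_dyadic_proj hs he₁ he₀ hm ((abs_sub_comm _ _).trans_le hv) (by lia)

theorem condMutualInfo_blockData_add_le (hs : (s : Set (ℝ × ℝ)) ⊆ F ×ˢ F) (he₀ : e₀ ∈ E)
    (he₁ : e₁ ∈ E) {m : ℕ} (hm : 𝒞.D + 1 ≤ 2 ^ m) (hv : |e₁ - e₀| ≤ (2 : ℝ) ^ (-v)) {a b : ℤ}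
    (hab : a ≤ b) :
    condMutualInfo s (𝒞.proj e₀ (a + v)) (fun p => dyadic a p.1) (𝒞.blockData e₁ v m a) +
        condMutualInfo s (𝒞.proj e₁ (a + v)) (fun p => dyadic a p.1) (𝒞.blockData e₁ v m a) ≤
      𝒞.infoIncrement s e₀ b (a + v - 3 * m) (a + v) +
        𝒞.infoIncrement s e₁ b (a + v - 3 * m) (a + v) := by
  set A := 𝒞.blockData e₁ v m a
  have hAy : Determines s A fun p => dyadic (a - m) p.1 := fun _ _ _ _ => congrArg Prod.fst
  have hA₀ : Determines s A (𝒞.proj e₀ (a + v - 3 * m)) :=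
    𝒞.determines_proj_of_blockData hs he₀ he₁ hm hv a
  have hA₁ : Determines s A (𝒞.proj e₁ (a + v - 3 * m)) := fun p hp q hq hpq =>
    𝒞.determines_proj_of_le hs he₁ (by lia) p hp q hq (congrArg Prod.snd hpq)
  have hXA₀ : Determines s (fun p => (𝒞.proj e₀ (a + v) p, dyadic (a - m) p.1)) A := by
    intro p hp q hq hpq
    rw [Prod.mk.injEq] at hpq
    have h₁ := 𝒞.determines_proj_of_dyadic_proj hs he₀ he₁ hm hv (a := a - m) (i := a + v - m)
      (by lia) p hp q hq
      (Prod.ext hpq.2 (𝒞.determines_proj_of_le hs he₀ (by lia) p hp q hq hpq.1))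
    rw [sub_sub, ← two_mul] at h₁
    exact Prod.ext hpq.2 h₁
  have hXA₁ : Determines s (fun p => (𝒞.proj e₁ (a + v) p, dyadic (a - m) p.1)) A :=
    fun p hp q hq hpq => Prod.ext (congrArg Prod.snd hpq)
      (𝒞.determines_proj_of_le hs he₁ (by lia) p hp q hq (congrArg Prod.fst hpq))
  have hby {i : ℤ} (hi : i ≤ b) := determines_dyadic_of_dyadicSquare (s := s) hi
  exact add_le_add
    (condMutualInfo_le_condEntropy_sub (𝒞.determines_proj_of_le hs he₀ (by lia)) (hby (by lia))
      (hby hab) hAy hA₀ hXA₀)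
    (condMutualInfo_le_condEntropy_sub (𝒞.determines_proj_of_le hs he₁ (by lia)) (hby (by lia))
      (hby hab) hAy hA₁ hXA₁)

theorem condEntropy_blockData_le (hs : (s : Set (ℝ × ℝ)) ⊆ F ×ˢ F) (he₀ : e₀ ∈ E) (he₁ : e₁ ∈ E)
    {m : ℕ} (hm : 𝒞.D + 1 ≤ 2 ^ m) (hv : (2 : ℝ) ^ (-v - 1) < |e₁ - e₀|)
    (hv' : |e₁ - e₀| ≤ (2 : ℝ) ^ (-v)) {a b : ℤ} (hab : a ≤ b) :
    condEntropy s (fun p => dyadic a p.1) (𝒞.blockData e₁ v m a) ≤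
      Real.log 2 * (s.card * (6 + 2 * (2 * 𝒞.D)) + (2 * 𝒞.D * 2 ^ (3 * m)) ^ 2 *
        (𝒞.infoIncrement s e₀ b (a + v - 3 * m) (a + v) +
          𝒞.infoIncrement s e₁ b (a + v - 3 * m) (a + v))) := by
  have hθ : e₁ - e₀ ≠ 0 := abs_pos.1 (lt_trans (by positivity) hv)
  have hR : 1 ≤ 2 * 𝒞.D * 2 ^ (3 * m) := by
    have : (1 : ℝ) ≤ 2 ^ (3 * m) := one_le_pow₀ one_le_two
    nlinarith [𝒞.B_nonneg, 𝒞.le_D]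
  have hfine {e} (he : e ∈ E) : ∀ p ∈ s, ∀ q ∈ s, 𝒞.proj e (a + v) p = 𝒞.proj e (a + v) q →
      |(e * p.1 + p.2) * (2 ^ a / (e₁ - e₀)) - (e * q.1 + q.2) * (2 ^ a / (e₁ - e₀))| ≤ 2 * 𝒞.D :=
    fun p hp q hq hpq => (𝒞.abs_rescaled_sub_le hs he hv (w := 0) (by simp) hp hq hpq).trans_eq
      (by rw [pow_zero, mul_one])
  refine (condEntropy_le_of_difference (X₀ := 𝒞.proj e₀ (a + v)) (X₁ := 𝒞.proj e₁ (a + v)) hR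
    (fun p _ => ?_) (hfine he₀) (hfine he₁)
    (fun p hp q hq hpq => 𝒞.abs_rescaled_sub_le hs he₀ hv (i := a + v - 3 * m) (by lia) hp hq
      (𝒞.determines_proj_of_blockData hs he₀ he₁ hm hv' a p hp q hq hpq))
    fun p hp q hq hpq => 𝒞.abs_rescaled_sub_le hs he₁ hv (i := a + v - 2 * m) (by lia) hp hq
      (congrArg Prod.snd hpq)).trans ?_
  · have hdiff : (e₁ * p.1 + p.2) * (2 ^ a / (e₁ - e₀)) - (e₀ * p.1 + p.2) * (2 ^ a / (e₁ - e₀)) =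
        p.1 * 2 ^ a := by field_simp; ring
    rw [hdiff, dyadic, abs_of_nonneg (sub_nonneg.2 (Int.floor_le _))]
    linarith [Int.lt_floor_add_one (p.1 * 2 ^ a)]
  · gcongr _ * (_ + _ * ?_)
    exact 𝒞.condMutualInfo_blockData_add_le hs he₀ he₁ hm hv' hab

theorem condEntropy_dyadic_sub_le (hs : (s : Set (ℝ × ℝ)) ⊆ F ×ˢ F) (he : e ∈ E) {m : ℕ} {a i : ℤ}
    (hi : a + v - 2 * m ≤ i) :
    condEntropy s (fun p => dyadic a p.1) (𝒞.proj e i) -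
        condEntropy s (fun p => dyadic (a - m) p.1) (𝒞.proj e i) ≤
      condEntropy s (fun p => dyadic a p.1) (𝒞.blockData e v m a) := by
  rw [condEntropy_eq_add_of_determines (f := fun p : ℝ × ℝ => dyadic a p.1)
    (g := fun p => dyadic (a - m) p.1) _ fun _ _ _ _ => dyadic_nested (by lia),
    add_sub_cancel_right]
  refine condEntropy_anti s _ fun p hp q hq hpq => ?_
  rw [Prod.mk.injEq] at hpq
  exact Prod.ext hpq.1 (𝒞.determines_proj_of_le hs he hi p hp q hq hpq.2)

theorem sum_infoIncrement_le (hs : (s : Set (ℝ × ℝ)) ⊆ F ×ˢ F) (he : e ∈ E) {m T : ℕ}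
    {b c i i' : ℤ} (hi : i ≤ c) (hi' : c + (T + 2) * m ≤ i') :
    ∑ t ∈ Finset.range T, 𝒞.infoIncrement s e b (c + t * m) (c + (t + 3) * m) ≤
      3 * 𝒞.infoIncrement s e b i i' := by
  let g (t : ℕ) := condEntropy s (dyadicSquare b) (𝒞.proj e (c + t * m))
  have hg : Antitone g := fun t t' h =>
    condEntropy_anti s _ (𝒞.determines_proj_of_le hs he (by gcongr))
  calc ∑ t ∈ Finset.range T, 𝒞.infoIncrement s e b (c + t * m) (c + (t + 3) * m)
      = ∑ t ∈ Finset.range T, (g t - g (t + 3)) :=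
        Finset.sum_congr rfl fun t _ => by
          simp only [infoIncrement, g, Nat.cast_add, Nat.cast_ofNat]
    _ ≤ 3 * (g 0 - g (T + 2)) := sum_range_shift_three_le hg T
    _ ≤ 3 * 𝒞.infoIncrement s e b i i' := by
      rw [infoIncrement]
      gcongr 3 * (?_ - ?_) <;> refine condEntropy_anti s _ (𝒞.determines_proj_of_le hs he ?_)
      · simpa using hi
      · simpa using hi'

/-- The entropy lost in each block of digits by `condEntropy_dyadic_le_add`, per point. -/
def blockCost : ℝ := Real.log 2 * (6 + 2 * (2 * 𝒞.D))

/-- The factor with which the information gained by the projections enters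
`condEntropy_dyadic_le_add` for blocks of length `m`. -/
def infoCost (m : ℕ) : ℝ := 3 * Real.log 2 * (2 * 𝒞.D * 2 ^ (3 * m)) ^ 2

/-- The entropy of the digits which `condEntropy_dyadic_le_add` does not control, per point. -/
def edgeCost (m : ℕ) : ℝ := Real.log (2 * (𝒞.D + 𝒞.B) + 2) + 2 * m * Real.log 2

theorem condEntropy_dyadic_le_add (hs : (s : Set (ℝ × ℝ)) ⊆ F ×ˢ F) (he₀ : e₀ ∈ E) (he₁ : e₁ ∈ E)
    {m : ℕ} (hm : 𝒞.D + 1 ≤ 2 ^ m) (hv : (2 : ℝ) ^ (-v - 1) < |e₁ - e₀|)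
    (hv' : |e₁ - e₀| ≤ (2 : ℝ) ^ (-v)) (T : ℕ) {j b i i' : ℤ} (hb : j + (T + 2) * m ≤ b)
    (hi : i ≤ j + v) (hi' : j + v + (T + 2) * m ≤ i') :
    condEntropy s (fun p => dyadic (j + (T + 2) * m) p.1) (𝒞.proj e₁ i') ≤
      condEntropy s (fun p => dyadic (j + 2 * m) p.1) (𝒞.proj e₁ i') +
        (T * (s.card * 𝒞.blockCost) + 𝒞.infoCost m *
          (𝒞.infoIncrement s e₀ b i i' + 𝒞.infoIncrement s e₁ b i i')) := by
  let Y (t : ℕ) := condEntropy s (fun p => dyadic (j + (t + 2) * m) p.1) (𝒞.proj e₁ i')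
  let increment (e : ℝ) (t : ℕ) := 𝒞.infoIncrement s e b (j + v + t * m) (j + v + (t + 3) * m)
  have hY : ∀ t ∈ Finset.range T, Y (t + 1) - Y t ≤ Real.log 2 * (s.card * (6 + 2 * (2 * 𝒞.D)) +
      (2 * 𝒞.D * 2 ^ (3 * m)) ^ 2 * (increment e₀ t + increment e₁ t)) := fun t ht => by
    have htT : (t + 3 : ℤ) * m ≤ (T + 2) * m := by
      have := Finset.mem_range.1 ht
      exact mul_le_mul_of_nonneg_right (by lia) (by lia)
    have hsub := 𝒞.condEntropy_dyadic_sub_le (v := v) (m := m) (a := j + (t + 3) * m) (i := i') hs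
      he₁ (by lia)
    have hblock := 𝒞.condEntropy_blockData_le hs he₀ he₁ hm hv hv' (a := j + (t + 3) * m) (b := b)
      (by lia)
    rw [show j + (t + 3) * m - m = j + (t + 2) * m by ring] at hsub
    rw [show j + (t + 3) * m + v - 3 * m = j + v + t * m by ring,
      show j + (t + 3) * m + v = j + v + (t + 3) * m by ring] at hblock
    have hY : Y (t + 1) = condEntropy s (fun p => dyadic (j + (t + 3) * m) p.1) (𝒞.proj e₁ i') := by
      simp only [Y, show ((t + 1 : ℕ) + 2 : ℤ) = t + 3 by push_cast; ring]
    rw [hY]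
    exact hsub.trans hblock
  have hsum := Finset.sum_le_sum hY
  rw [Finset.sum_range_sub Y, ← Finset.mul_sum, Finset.sum_add_distrib, Finset.sum_const,
    Finset.card_range, nsmul_eq_mul, ← Finset.mul_sum, Finset.sum_add_distrib] at hsum
  have hY₀ : Y 0 = condEntropy s (fun p => dyadic (j + 2 * m) p.1) (𝒞.proj e₁ i') := by simp [Y]
  rw [← hY₀, ← sub_le_iff_le_add']
  calc Y T - Y 0 ≤ Real.log 2 * (T * (s.card * (6 + 2 * (2 * 𝒞.D))) + (2 * 𝒞.D * 2 ^ (3 * m)) ^ 2 *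
          (3 * 𝒞.infoIncrement s e₀ b i i' + 3 * 𝒞.infoIncrement s e₁ b i i')) := by
        refine hsum.trans ?_
        gcongr
        exacts [𝒞.sum_infoIncrement_le hs he₀ hi hi', 𝒞.sum_infoIncrement_le hs he₁ hi hi']
    _ = T * (s.card * 𝒞.blockCost) + 𝒞.infoCost m *
          (𝒞.infoIncrement s e₀ b i i' + 𝒞.infoIncrement s e₁ b i i') := by
        rw [blockCost, infoCost]; ring

theorem condEntropy_dyadicSquare_le (hs : (s : Set (ℝ × ℝ)) ⊆ F ×ˢ F) (he : e ∈ E) {b i : ℤ}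
    (hi : b ≤ i) :
    condEntropy s (dyadicSquare b) (fun p => (dyadic b p.1, 𝒞.proj e i p)) ≤
      s.card * Real.log (2 * (𝒞.D + 𝒞.B) + 2) := by
  have hD := 𝒞.D_pos.le
  have hB := 𝒞.B_nonneg
  have hsnd : condEntropy s (dyadicSquare b) (fun p => (dyadic b p.1, 𝒞.proj e i p)) ≤
      condEntropy s (fun p => dyadic b p.2) fun p => (dyadic b p.1, 𝒞.proj e i p) :=
    sub_le_sub_right (entropy_mono fun p _ q _ hpq => by
      simp only [dyadicSquare, Prod.mk.injEq] at hpq ⊢; tauto) _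
  refine hsnd.trans (condEntropy_dyadic_le (by positivity) fun p hp q hq hpq => ?_)
  rw [Prod.mk.injEq] at hpq
  calc |p.2 - q.2| = |(e * p.1 + p.2 - (e * q.1 + q.2)) - e * (p.1 - q.1)| := by ring_nf
    _ ≤ |e * p.1 + p.2 - (e * q.1 + q.2)| + |e| * |p.1 - q.1| :=
      (abs_sub _ _).trans_eq (by rw [abs_mul])
    _ ≤ 𝒞.D * 2 ^ (-i) + 𝒞.B * 2 ^ (-b) :=
      add_le_add (𝒞.abs_sub_le_of_proj_eq hs he hp hq hpq.2)
        (mul_le_mul (𝒞.abs_le e he) (abs_sub_le_of_dyadic_eq hpq.1) (abs_nonneg _) hB)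
    _ ≤ 𝒞.D * 2 ^ (-b) + 𝒞.B * 2 ^ (-b) := by gcongr; exact one_le_two
    _ = (𝒞.D + 𝒞.B) * 2 ^ (-b) := by ring

end CellSystem

/-- A finite subset of `F ×ˢ F` inside a single dyadic square of level `j`. -/
structure IsPiece (F : Set ℝ) (j : ℤ) (s : Finset (ℝ × ℝ)) : Prop where
  subset : (s : Set (ℝ × ℝ)) ⊆ F ×ˢ F
  eq : ∀ p ∈ s, ∀ q ∈ s, dyadicSquare j p = dyadicSquare j q

namespace CellSystem

variable {E F : Set ℝ} {d : ℝ} (𝒞 : CellSystem E F d) {s : Finset (ℝ × ℝ)} {e₀ e₁ : ℝ}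

theorem condEntropy_dyadic_le_of_isPiece {j : ℤ} (hs : IsPiece F j s) {β : Type*} (A : ℝ × ℝ → β)
    (m : ℕ) : condEntropy s (fun p => dyadic (j + m) p.1) A ≤ s.card * (m * Real.log 2) := by
  rw [← Real.log_pow]
  exact (branchingBound_dyadic F m).condEntropy_le (f := Prod.fst) (fun p hp => (hs.subset hp).1)
    fun p hp q hq _ => congrArg Prod.fst (hs.eq p hp q hq)

theorem condEntropy_dyadicSquare_le_of_isPiece {j v : ℤ} (hs : IsPiece F j s) (he₀ : e₀ ∈ E)
    (he₁ : e₁ ∈ E) {m : ℕ} (hm : 𝒞.D + 1 ≤ 2 ^ m) (hv : (2 : ℝ) ^ (-v - 1) < |e₁ - e₀|)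
    (hv' : |e₁ - e₀| ≤ (2 : ℝ) ^ (-v)) {N n : ℕ} (hN : 2 ≤ N) (huv : (N * m : ℕ) ≤ v)
    (hvn : v + (N * m : ℕ) ≤ n) :
    condEntropy s (dyadicSquare (j + (N * m : ℕ))) (𝒞.proj e₁ (j + n)) ≤
      s.card * (N * 𝒞.blockCost + 𝒞.edgeCost m) + 𝒞.infoCost m *
        (𝒞.infoIncrement s e₀ (j + (N * m : ℕ)) (j + (N * m : ℕ)) (j + n) +
          𝒞.infoIncrement s e₁ (j + (N * m : ℕ)) (j + (N * m : ℕ)) (j + n)) := by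
  obtain ⟨T, rfl⟩ := Nat.exists_eq_add_of_le' hN
  have hblocks := 𝒞.condEntropy_dyadic_le_add hs.subset he₀ he₁ hm hv hv' T
    (j := j) (b := j + ((T + 2) * m : ℕ)) (i := j + ((T + 2) * m : ℕ)) (i' := j + n)
    (by push_cast; rfl) (by lia) (by push_cast at hvn; lia)
  have hcoarse := condEntropy_dyadic_le_of_isPiece hs (𝒞.proj e₁ (j + n)) (2 * m)
  have hfine := 𝒞.condEntropy_dyadicSquare_le hs.subset he₁ (b := j + ((T + 2) * m : ℕ))
    (i := j + n) (by lia)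
  have hblockCost : 0 ≤ s.card * 𝒞.blockCost := by
    have := 𝒞.D_pos
    unfold blockCost
    positivity
  rw [condEntropy_eq_add_of_determines _ (determines_dyadic_of_dyadicSquare le_rfl), edgeCost]
  push_cast at hblocks hcoarse hfine ⊢
  linarith

theorem entropy_dyadicSquare_sub_entropy_proj_le {j : ℤ} (hs : IsPiece F j s) (he₀ : e₀ ∈ E)
    (he₁ : e₁ ∈ E) {m N κ : ℕ} (hm : 𝒞.D + 1 ≤ 2 ^ m) (hN : 2 ≤ N)
    (hlow : (2 : ℝ) ^ (-(κ * (N * m) : ℕ) : ℤ) ≤ |e₁ - e₀|)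
    (hupp : |e₁ - e₀| ≤ (2 : ℝ) ^ (-(N * m : ℕ) : ℤ)) :
    entropy s (dyadicSquare (j + (N * m : ℕ))) - entropy s (𝒞.proj e₁ (j + (N * m : ℕ))) ≤
      s.card * (N * 𝒞.blockCost + 𝒞.edgeCost m) + (𝒞.infoCost m + 1) *
        (𝒞.infoIncrement s e₀ (j + (N * m : ℕ)) (j + (N * m : ℕ)) (j + ((1 + κ) * (N * m) : ℕ)) +
          𝒞.infoIncrement s e₁ (j + (N * m : ℕ)) (j + (N * m : ℕ))
            (j + ((1 + κ) * (N * m) : ℕ))) := by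
  obtain ⟨k, hk, hk'⟩ := exists_mem_Ioc_zpow (lt_of_lt_of_le (by positivity) hlow) one_lt_two
  have hku : k < -(N * m : ℕ) := (zpow_lt_zpow_iff_right₀ one_lt_two).1 (hk.trans_le hupp)
  have huk : -(κ * (N * m) : ℕ) ≤ k + 1 :=
    (zpow_le_zpow_iff_right₀ one_lt_two).1 (hlow.trans hk')
  have hcond := 𝒞.condEntropy_dyadicSquare_le_of_isPiece hs he₀ he₁ hm (v := -(k + 1))
    (n := (1 + κ) * (N * m)) (by rwa [neg_neg, add_sub_cancel_right]) (by rwa [neg_neg]) hN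
    (by lia) (by push_cast at huk ⊢; linarith)
  have hinc : 0 ≤ 𝒞.infoIncrement s e₀ (j + (N * m : ℕ)) (j + (N * m : ℕ))
      (j + ((1 + κ) * (N * m) : ℕ)) := 𝒞.infoIncrement_nonneg hs.subset he₀ _
        (add_le_add_right (Int.ofNat_le.2 (Nat.le_mul_of_pos_left _ (by lia))) j)
  have hentropy : entropy s (dyadicSquare (j + (N * m : ℕ))) =
      entropy s fun p => (dyadicSquare (j + (N * m : ℕ)) p, 𝒞.proj e₁ (j + (N * m : ℕ)) p) :=
    entropy_congr (fun _ _ _ _ h => congrArg Prod.fst h) fun p hp q hq h => Prod.ext h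
      (𝒞.determines_proj_of_dyadicSquare hs.subset he₁ _ p hp q hq h)
  rw [hentropy]
  unfold infoIncrement condEntropy at *
  linarith

end CellSystem

end PairEstimate

section Gain

theorem IsPiece.filter_dyadicSquare {F : Set ℝ} {s : Finset (ℝ × ℝ)}
    (hs : (s : Set (ℝ × ℝ)) ⊆ F ×ˢ F) (i : ℤ) (a : ℤ × ℤ) :
    IsPiece F i {p ∈ s | dyadicSquare i p = a} where
  subset := (Finset.coe_subset.2 (Finset.filter_subset _ s)).trans hs
  eq _ hp _ hq := (Finset.mem_filter.1 hp).2.trans (Finset.mem_filter.1 hq).2.symm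

theorem IsPiece.product {F : Set ℝ} {T : Finset ℝ} (hTF : (T : Set ℝ) ⊆ F) {i : ℤ}
    (hT : ∀ x ∈ T, ∀ y ∈ T, dyadic i x = dyadic i y) : IsPiece F i (T ×ˢ T) where
  subset := by rw [Finset.coe_product]; exact prod_mono hTF hTF
  eq p hp q hq := by
    rw [Finset.mem_product] at hp hq
    exact Prod.ext (hT _ hp.1 _ hq.1) (hT _ hp.2 _ hq.2)

theorem entropy_dyadicSquare_sub_le {F : Set ℝ} {n : ℕ} {ρ : ℝ}
    (hF : BranchingBound dyadic F n ρ) {s : Finset (ℝ × ℝ)} (hs : (s : Set (ℝ × ℝ)) ⊆ F ×ˢ F)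
    (i : ℤ) :
    entropy s (dyadicSquare (i + n)) - entropy s (dyadicSquare i) ≤ 2 * (s.card * Real.log ρ) := by
  have hfst := hF.condEntropy_le (f := Prod.fst) (A := dyadicSquare i) (fun p hp => (hs hp).1)
    fun p _ q _ h => congrArg Prod.fst h
  have hsnd := hF.condEntropy_le (f := Prod.snd)
    (A := fun p => (dyadic (i + n) p.1, dyadicSquare i p)) (fun p hp => (hs hp).2)
    fun p _ q _ h => congrArg (fun a => a.2.2) h
  have hpair : entropy s (dyadicSquare (i + n)) ≤
      entropy s fun p => (dyadic (i + n) p.2, dyadic (i + n) p.1, dyadicSquare i p) :=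
    entropy_mono fun p _ q _ h => by
      simp only [dyadicSquare, Prod.mk.injEq] at h ⊢
      tauto
  unfold condEntropy at hfst hsnd
  linarith

namespace CellSystem

variable {E F : Set ℝ} {d : ℝ} (𝒞 : CellSystem E F d) {s : Finset (ℝ × ℝ)}

theorem entropy_proj_eq_add (hs : (s : Set (ℝ × ℝ)) ⊆ F ×ˢ F) {e : ℝ} (he : e ∈ E) (i i' : ℤ) :
    entropy s (𝒞.proj e i') = entropy s (𝒞.proj e i) +
      condEntropy s (𝒞.proj e i') (dyadicSquare i) + 𝒞.infoIncrement s e i i i' := by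
  have hdet : entropy s (fun p => (dyadicSquare i p, 𝒞.proj e i p)) =
      entropy s (dyadicSquare i) :=
    entropy_congr (fun p hp q hq h => Prod.ext h
      (𝒞.determines_proj_of_dyadicSquare hs he i p hp q hq h)) fun _ _ _ _ h => congrArg Prod.fst h
  have hswap : entropy s (fun p => (dyadicSquare i p, 𝒞.proj e i' p)) =
      entropy s (fun p => (𝒞.proj e i' p, dyadicSquare i p)) :=
    entropy_congr (fun _ _ _ _ h => by simp_all) fun _ _ _ _ h => by simp_all
  rw [infoIncrement, condEntropy, condEntropy, condEntropy, hdet, hswap]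
  ring

theorem entropy_proj_le {e : ℝ} (he : e ∈ E) {j : ℤ} (hs : IsPiece F j s) (n : ℕ) :
    entropy s (𝒞.proj e (j + n)) ≤ s.card * (Real.log 𝒞.C + d * n * Real.log 2) := by
  rw [← Real.log_rpow two_pos, ← Real.log_mul 𝒞.C_pos.ne' (by positivity)]
  exact (𝒞.branching n).entropy_le (f := fun p : ℝ × ℝ => e * p.1 + p.2)
    (fun p hp => mul_fst_add_snd_mem he (hs.subset hp)) fun p hp q hq =>
      𝒞.determines_proj_of_dyadicSquare hs.subset he j p hp q hq (hs.eq p hp q hq)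

variable {ι : Type*} [Fintype ι] {e : ι → ℝ} {K c : ℝ}

/-- The total entropy at level `i` of the projections of `s` with slopes `e σ`, each compared with
`K` times the entropy of `s` itself. -/
def gain (e : ι → ℝ) (K : ℝ) (i : ℤ) (s : Finset (ℝ × ℝ)) : ℝ :=
  ∑ σ, (entropy s (𝒞.proj (e σ) i) - K * entropy s (dyadicSquare i))

/-- The average gain over the slopes, per point and level, is at least `c` for all pieces observed
at the relative level `n`. -/
def HasGain (e : ι → ℝ) (K : ℝ) (n : ℕ) (c : ℝ) : Prop :=
  ∀ (j : ℤ) (s : Finset (ℝ × ℝ)), IsPiece F j s →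
    Fintype.card ι * (c * n * s.card) ≤ 𝒞.gain e K (j + n) s

theorem gain_add_le (he : ∀ σ, e σ ∈ E) {n : ℕ} (hn : 𝒞.HasGain e K n c)
    (hs : (s : Set (ℝ × ℝ)) ⊆ F ×ˢ F) (i : ℤ) :
    𝒞.gain e K i s + Fintype.card ι * (c * n * s.card) +
      ∑ σ, 𝒞.infoIncrement s (e σ) i i (i + n) ≤ 𝒞.gain e K (i + n) s := by
  have hsquare : entropy s (dyadicSquare (i + n)) =
      condEntropy s (dyadicSquare (i + n)) (dyadicSquare i) + entropy s (dyadicSquare i) := by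
    rw [condEntropy, sub_add_cancel]
    exact entropy_congr (fun _ _ _ _ h => congrArg Prod.fst h) fun _ _ _ _ h =>
      Prod.ext h (dyadicSquare_nested (by lia) h)
  have hcond : Fintype.card ι * (c * n * s.card) ≤
      ∑ σ, (condEntropy s (𝒞.proj (e σ) (i + n)) (dyadicSquare i) -
        K * condEntropy s (dyadicSquare (i + n)) (dyadicSquare i)) := by
    simp only [condEntropy_eq_sum, Finset.mul_sum, ← Finset.sum_sub_distrib]
    rw [Finset.sum_comm, Finset.card_eq_sum_card_image (dyadicSquare i) s, Nat.cast_sum,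
      Finset.mul_sum, Finset.mul_sum]
    exact Finset.sum_le_sum fun a _ => hn i _ (IsPiece.filter_dyadicSquare hs i a)
  have hgain : 𝒞.gain e K (i + n) s = 𝒞.gain e K i s +
      ∑ σ, (condEntropy s (𝒞.proj (e σ) (i + n)) (dyadicSquare i) -
        K * condEntropy s (dyadicSquare (i + n)) (dyadicSquare i)) +
      ∑ σ, 𝒞.infoIncrement s (e σ) i i (i + n) := by
    simp only [gain, ← Finset.sum_add_distrib]
    refine Finset.sum_congr rfl fun σ _ => ?_
    rw [𝒞.entropy_proj_eq_add hs (he σ) i, hsquare]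
    ring
  rw [hgain]
  gcongr

theorem hasGain_mul (he : ∀ σ, e σ ∈ E) {n : ℕ} (hn : 𝒞.HasGain e K n c) {k : ℕ} (hk : 1 ≤ k) :
    𝒞.HasGain e K (k * n) c := by
  induction k, hk using Nat.le_induction with
  | base => rwa [one_mul]
  | succ k _ ih =>
    intro j s hs
    have hadd := 𝒞.gain_add_le he hn hs.subset (j + (k * n : ℕ))
    have hinc : 0 ≤ ∑ σ, 𝒞.infoIncrement s (e σ) (j + (k * n : ℕ)) (j + (k * n : ℕ))
        (j + (k * n : ℕ) + n) :=
      Finset.sum_nonneg fun σ _ => 𝒞.infoIncrement_nonneg hs.subset (he σ) _ (by lia)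
    have hk := ih j s hs
    rw [show j + ((k + 1) * n : ℕ) = j + (k * n : ℕ) + n by push_cast; ring]
    push_cast at hk hadd hinc ⊢
    linarith

theorem neg_le_gain (e : ι → ℝ) (K : ℝ) (i : ℤ) :
    -(Fintype.card ι * (K * entropy s (dyadicSquare i))) ≤ 𝒞.gain e K i s := by
  rw [gain, Finset.sum_sub_distrib, Finset.sum_const, Finset.card_univ, nsmul_eq_mul]
  linarith [Finset.sum_nonneg fun σ (_ : σ ∈ Finset.univ) => entropy_nonneg s (𝒞.proj (e σ) i)]

theorem hasGain_trivial (e : ι → ℝ) (hK : 0 ≤ K) (n : ℕ) :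
    𝒞.HasGain e K n (-(2 * K * Real.log 2)) := by
  intro j s hs
  have hentropy := entropy_dyadicSquare_sub_le (branchingBound_dyadic F n) hs.subset j
  rw [entropy_eq_zero hs.eq, sub_zero, Real.log_pow] at hentropy
  calc
    _ ≤ Fintype.card ι * -(K * entropy s (dyadicSquare (j + n))) := by
      refine mul_le_mul_of_nonneg_left ?_ (Nat.cast_nonneg _)
      linarith [mul_le_mul_of_nonneg_left hentropy hK]
    _ ≤ _ := by
      rw [mul_neg]
      exact 𝒞.neg_le_gain e K (j + n)

theorem le_of_hasGain_of_lt_assouadDim [Nonempty ι] (he : ∀ σ, e σ ∈ E) (hK : 0 ≤ K) {t : ℝ}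
    (ht₀ : 0 ≤ t) (ht : t < assouadDim F) {n : ℕ} (hn : 1 ≤ n)
    (hC : Real.log 𝒞.C ≤ n * Real.log 2) (hgain : 𝒞.HasGain e K n c) :
    c ≤ (d + 1) * Real.log 2 - 2 * K * t * Real.log 2 := by
  obtain ⟨j, T, hTF, hTj, hTn, hcard⟩ := exists_regular_of_lt_assouadDim ht₀ ht hn
  have hs : IsPiece F j (T ×ˢ T) := IsPiece.product hTF hTj
  have hT : (0 : ℝ) < T.card := lt_of_lt_of_le (by positivity) hcard
  have hlogT : n * (t * Real.log 2) ≤ Real.log T.card := by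
    rw [← mul_assoc, mul_comm (n : ℝ), ← Real.log_rpow two_pos]
    exact Real.log_le_log (by positivity) hcard
  set M : ℝ := ((T ×ˢ T).card : ℝ) with hM
  have hMT : M = T.card * T.card := by rw [hM, Finset.card_product, Nat.cast_mul]
  have hM₀ : 0 < M := by rw [hMT]; positivity
  have hsquare : entropy (T ×ˢ T) (dyadicSquare (j + n)) = M * (2 * Real.log T.card) := by
    rw [entropy_of_injOn, ← hM, hMT, Real.log_mul hT.ne' hT.ne', two_mul]
    intro p hp q hq hpq
    rw [Finset.coe_product, mem_prod] at hp hq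
    exact Prod.ext (hTn hp.1 hq.1 (congrArg Prod.fst hpq))
      (hTn hp.2 hq.2 (congrArg Prod.snd hpq))
  have hupper : 𝒞.gain e K (j + n) (T ×ˢ T) ≤
      Fintype.card ι * (n * M * ((d + 1) * Real.log 2 - 2 * K * t * Real.log 2)) := by
    rw [gain, ← nsmul_eq_mul, ← Finset.card_univ]
    refine Finset.sum_le_card_nsmul _ _ _ fun σ _ => ?_
    have hproj := 𝒞.entropy_proj_le (he σ) hs n
    have hlogC := mul_le_mul_of_nonneg_left hC hM₀.le
    have hKT := mul_le_mul_of_nonneg_left hlogT (show 0 ≤ K * M * 2 by positivity)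
    rw [hsquare]
    linarith
  have hlower := (hgain j _ hs).trans hupper
  have hι : (0 : ℝ) < Fintype.card ι := Nat.cast_pos.2 Fintype.card_pos
  have hn₀ : (0 : ℝ) < n := Nat.cast_pos.2 hn
  refine le_of_mul_le_mul_left ?_ (show (0 : ℝ) < n * M by positivity)
  linarith [le_of_mul_le_mul_left hlower hι]

theorem exists_infoIncrement_add_le [Nonempty ι] (he : ∀ σ, e σ ∈ E) (φ : ι ≃ ι) {ε : ℝ} {j : ℤ}
    {u κ : ℕ} (hκ : 1 ≤ κ) (hu : 𝒞.HasGain e K u c) (hs : IsPiece F j s)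
    (hlt : 𝒞.gain e K (j + ((1 + κ) * u : ℕ)) s <
      Fintype.card ι * ((c + ε) * ((1 + κ) * u : ℕ) * s.card)) :
    ∃ σ, 𝒞.infoIncrement s (e (φ σ)) (j + u) (j + u) (j + ((1 + κ) * u : ℕ)) +
        𝒞.infoIncrement s (e σ) (j + u) (j + u) (j + ((1 + κ) * u : ℕ)) ≤
      2 * (ε * ((1 + κ) * u : ℕ) * s.card) := by
  let inc (σ : ι) := 𝒞.infoIncrement s (e σ) (j + u) (j + u) (j + ((1 + κ) * u : ℕ))
  have hadd := 𝒞.gain_add_le he (𝒞.hasGain_mul he hu hκ) hs.subset (j + u)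
  rw [show j + u + ((κ * u : ℕ) : ℤ) = j + ((1 + κ) * u : ℕ) by push_cast; ring] at hadd
  have hbase := hu j s hs
  have hsum : ∑ σ, inc σ ≤ Fintype.card ι * (ε * ((1 + κ) * u : ℕ) * s.card) := by
    have hcast : (((1 + κ) * u : ℕ) : ℝ) = u + (κ * u : ℕ) := by push_cast; ring
    rw [hcast] at hlt ⊢
    linarith
  obtain ⟨σ, -, hσ⟩ : ∃ σ ∈ (Finset.univ : Finset ι),
      inc (φ σ) + inc σ ≤ 2 * (ε * ((1 + κ) * u : ℕ) * s.card) := by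
    refine Finset.exists_le_of_sum_le Finset.univ_nonempty ?_
    rw [Finset.sum_add_distrib, Equiv.sum_comp φ inc, Finset.sum_const, Finset.card_univ,
      nsmul_eq_mul]
    linarith
  exact ⟨σ, hσ⟩

theorem neg_lt_entropy_of_gain_lt [Nonempty ι] {i : ℤ} {x : ℝ}
    (h : 𝒞.gain e K i s < Fintype.card ι * x) : -x < K * entropy s (dyadicSquare i) := by
  have hι : (0 : ℝ) < Fintype.card ι := Nat.cast_pos.2 Fintype.card_pos
  refine lt_of_mul_lt_mul_left ?_ hι.le
  linarith [𝒞.neg_le_gain e K i (s := s)]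

theorem hasGain_step [Nonempty ι] (he : ∀ σ, e σ ∈ E) (φ : ι ≃ ι) {ε t t' C' : ℝ} (hK : 0 < K)
    (hC' : 0 < C') (hF : ∀ n : ℕ, BranchingBound dyadic F n (C' * 2 ^ (t' * n)))
    {m N κ : ℕ} (hm : 𝒞.D + 1 ≤ 2 ^ m) (hN : 2 ≤ N) (hκ : 1 ≤ κ)
    (hlow : ∀ σ, (2 : ℝ) ^ (-(κ * (N * m) : ℕ) : ℤ) ≤ |e σ - e (φ σ)|)
    (hupp : ∀ σ, |e σ - e (φ σ)| ≤ (2 : ℝ) ^ (-(N * m : ℕ) : ℤ))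
    (hc : c ≤ (d + 1) * Real.log 2 - 2 * K * t * Real.log 2)
    (hnum : N * 𝒞.blockCost + 𝒞.edgeCost m + 2 * Real.log C' + Real.log 𝒞.C <
      (N * m : ℕ) * ((2 * t - d) * Real.log 2 - 2 * (t' - t) * κ * Real.log 2 -
        (1 + κ) * (((d + 1) * Real.log 2 + ε) / K) - 2 * (𝒞.infoCost m + 1) * ε * (1 + κ)))
    (hgain : 𝒞.HasGain e K (N * m) c) : 𝒞.HasGain e K ((1 + κ) * (N * m)) (c + ε) := by
  intro j s hs
  by_contra! hlt
  obtain ⟨σ, hσ⟩ := 𝒞.exists_infoIncrement_add_le he φ hκ hgain hs hlt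
  have hpair := 𝒞.entropy_dyadicSquare_sub_entropy_proj_le hs (he (φ σ)) (he σ) hm hN (hlow σ)
    (hupp σ)
  set u := N * m
  set P := 𝒞.infoCost m + 1
  have hP : 0 ≤ P := by unfold P infoCost; positivity
  have hPinc := mul_le_mul_of_nonneg_left hσ hP
  have hproj := 𝒞.entropy_proj_le (he σ) hs u
  have hbig := 𝒞.neg_lt_entropy_of_gain_lt hlt
  have hfine := entropy_dyadicSquare_sub_le (hF (κ * u)) hs.subset (j + u)
  rw [show j + u + ((κ * u : ℕ) : ℤ) = j + ((1 + κ) * u : ℕ) by push_cast; ring,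
    Real.log_mul hC'.ne' (by positivity), Real.log_rpow two_pos] at hfine
  have hM : (0 : ℝ) < s.card := by
    refine Nat.cast_pos.2 (Finset.card_pos.2 (Finset.nonempty_iff_ne_empty.2 ?_))
    rintro rfl
    simp [entropy] at hbig
  have hsquare : (2 * t * Real.log 2 - ((d + 1) * Real.log 2 + ε) / K) *
      (((1 + κ) * u : ℕ) * s.card) ≤ entropy s (dyadicSquare (j + ((1 + κ) * u : ℕ))) := by
    refine le_of_mul_le_mul_left (le_trans ?_ hbig.le) hK
    rw [← mul_assoc, mul_sub, mul_div_cancel₀ _ hK.ne', mul_assoc (c + ε), ← neg_mul]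
    gcongr
    linarith
  have hnumM := mul_lt_mul_of_pos_left hnum hM
  push_cast at *
  linarith

end CellSystem

end Gain

section Conclusion

variable {E F : Set ℝ} {d : ℝ}

namespace CellSystem

/-- The partitions into the classes of the chain relation, at scales proportional to `1 + B`. -/
def ofCoverBound {B C : ℝ} (hS : CoverBound (E * F + F) d C) (hC : 0 < C) (hd : d < 1) (hB : 0 ≤ B)
    (hE : ∀ e ∈ E, |e| ≤ B) : CellSystem E F d where
  cell i := chainCell (E * F + F) ((1 + B) * (2 : ℝ) ^ (-i))
  B := B
  D := max 1 ((6 * C) ^ (1 / (1 - d))) * (1 + B)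
  C := C * (2 * (max 1 ((6 * C) ^ (1 / (1 - d))) * (1 + B)) / (1 + B)) ^ d
  B_nonneg := hB
  le_D := le_mul_of_one_le_left (by positivity) (le_max_left _ _)
  C_pos := by positivity
  abs_le := hE
  cell_eq _ _ hz _ hz' h := chainCell_eq_of_abs_sub_le hz hz' h
  nested i i' hi z _ z' hz' h := by
    refine chainCell_nested (by positivity) ?_ hz' h
    gcongr
    norm_num
  abs_sub_le _ _ hz _ hz' h := by
    rw [mul_assoc]
    exact hS.abs_sub_le_of_chainCell_eq hC.le hd (by positivity) hz hz' h
  branching := hS.branchingBound_chainCell hC.le hd (by positivity) le_rfl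

variable (𝒞 : CellSystem E F d)

theorem exists_blockLength {η : ℝ} (hη : 0 < η) :
    ∃ m : ℕ, 0 < m ∧ 𝒞.D + 1 ≤ 2 ^ m ∧ 𝒞.blockCost ≤ m * η := by
  obtain ⟨m₁, hm₁⟩ := pow_unbounded_of_one_lt (𝒞.D + 1) one_lt_two
  obtain ⟨m₂, hm₂⟩ := exists_nat_gt (𝒞.blockCost / η)
  refine ⟨m₁ + m₂ + 1, by lia, hm₁.le.trans (pow_le_pow_right₀ one_le_two (by lia)), ?_⟩
  refine ((div_lt_iff₀ hη).1 hm₂).le.trans ?_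
  gcongr
  lia

theorem exists_gain_parameters (hd : 0 ≤ d) {θ : ℝ} (hθ : 0 < θ) (κ : ℕ) (C' : ℝ) :
    ∃ (K ε : ℝ) (m W : ℕ), 0 < K ∧ 0 < ε ∧ 0 < m ∧ 𝒞.D + 1 ≤ 2 ^ m ∧ ∀ N : ℕ, W ≤ N * m →
      N * 𝒞.blockCost + 𝒞.edgeCost m + 2 * Real.log C' + Real.log 𝒞.C <
        (N * m : ℕ) * (θ - (1 + κ) * (((d + 1) * Real.log 2 + ε) / K) -
          2 * (𝒞.infoCost m + 1) * ε * (1 + κ)) := by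
  have hθ₄ : 0 < θ / 4 := by positivity
  obtain ⟨m, hm₀, hm, hblock⟩ := 𝒞.exists_blockLength hθ₄
  have hP : 0 < 𝒞.infoCost m + 1 := by unfold infoCost; positivity
  set P := 𝒞.infoCost m + 1
  set ε := min 1 (θ / 4 / (2 * P * (1 + κ)))
  have hinfo : 2 * P * ε * (1 + κ) ≤ θ / 4 := by
    have hε := (le_div_iff₀ (by positivity)).1 (min_le_right 1 (θ / 4 / (2 * P * (1 + κ))))
    linarith
  set L := (d + 1) * Real.log 2 + 1
  have hL : 0 < L := by positivity
  have hK : (1 + κ) * (((d + 1) * Real.log 2 + ε) / (4 * (1 + κ) * L / θ)) ≤ θ / 4 :=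
    calc
      _ ≤ (1 + κ) * (L / (4 * (1 + κ) * L / θ)) := by
        gcongr
        exact add_le_add_right (min_le_left _ _) _
      _ = θ / 4 := by field_simp
  obtain ⟨W, hW⟩ := exists_nat_gt
    ((𝒞.edgeCost m + 2 * Real.log C' + Real.log 𝒞.C) / (θ / 4))
  refine ⟨4 * (1 + κ) * L / θ, ε, m, W, by positivity, by positivity, hm₀, hm,
    fun N hN => ?_⟩
  have hedge : 𝒞.edgeCost m + 2 * Real.log C' + Real.log 𝒞.C < (N * m : ℕ) * (θ / 4) :=
    ((div_lt_iff₀ hθ₄).1 hW).trans_le (by gcongr)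
  calc
    _ < (N * m : ℕ) * (θ - θ / 4 - θ / 4) := by
      have hblocks := mul_le_mul_of_nonneg_left hblock (Nat.cast_nonneg (α := ℝ) N)
      push_cast at hedge ⊢
      linarith
    _ ≤ _ := by gcongr

theorem hasGain_of_scaleSequence {ι : Type*} [Fintype ι] {e : ι → ℝ} (he : ∀ σ, e σ ∈ E)
    {K c ε : ℝ} {κ m W : ℕ} {w : ℕ → ℕ} (hw : ScaleSequence κ m W w) (hW : 0 < W)
    (hzero : 𝒞.HasGain e K (w 0) c) {I : ℕ} (hstep : ∀ i < I, ∀ c, 𝒞.HasGain e K (w i) c →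
      𝒞.HasGain e K ((1 + κ) * w i) (c + ε)) : 𝒞.HasGain e K (w I) (c + I * ε) := by
  induction I with
  | zero => simpa using hzero
  | succ I ih =>
    obtain ⟨k, hk⟩ := hw.dvd_succ I
    have hk₀ : 1 ≤ k := Nat.one_le_iff_ne_zero.2 fun h => by
      have := hw.le (I + 1)
      simp only [hk, h, mul_zero] at this
      lia
    have hgain := 𝒞.hasGain_mul he
      (hstep I I.lt_succ_self _ (ih fun i hi => hstep i (hi.trans I.lt_succ_self))) hk₀
    rw [hk, mul_comm, show c + ((I + 1 : ℕ) : ℝ) * ε = c + I * ε + ε by push_cast; ring]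
    exact hgain

end CellSystem

theorem involutive_flip {I : ℕ} (i : Fin I) :
    Function.Involutive fun σ : Fin I → Bool => Function.update σ i (!σ i) := fun σ => by simp

theorem CellSystem.two_mul_sub_le (𝒞 : CellSystem E F d) (hd : 0 ≤ d) {τ t t' : ℝ} {κ : ℕ}
    (hE : μH[τ] E ≠ 0) (hκ : 1 < κ * τ) (ht₀ : 0 ≤ t) (ht : t < assouadDim F)
    (ht' : assouadDim F < t') : 2 * t - d ≤ 2 * (t' - t) * κ := by
  by_contra! hlt
  have hlog : 0 < Real.log 2 := Real.log_pos one_lt_two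
  obtain ⟨C', hC', hcov⟩ := exists_coverBound_of_assouadDim_lt ht'
  obtain ⟨K, ε, m, W, hK, hε, hm₀, hm, hnum⟩ := 𝒞.exists_gain_parameters hd
    (θ := (2 * t - d) * Real.log 2 - 2 * (t' - t) * κ * Real.log 2)
    (by rw [← sub_mul]; exact mul_pos (sub_pos.2 hlt) hlog) κ (C' * 2 ^ t' * 4)
  obtain ⟨n₀, hn₀⟩ := exists_nat_gt (Real.log 𝒞.C / Real.log 2)
  set R := (d + 1) * Real.log 2 - 2 * K * t * Real.log 2
  obtain ⟨I, hI⟩ := exists_nat_gt ((R + 2 * K * Real.log 2) / ε)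
  obtain ⟨w, hw, G, hsep, hG⟩ := exists_separatedFamily hE 𝒞.abs_le hκ hm₀
    (show 0 < W + n₀ + 2 * m by lia) I
  choose e he using fun σ => nonempty_of_measure_ne_zero (hG σ).2
  have heE (σ) : e σ ∈ E := (hG σ).1 (he σ)
  have hgain_le {i : ℕ} {c : ℝ} (hc : 𝒞.HasGain e K (w i) c) : c ≤ R := by
    refine 𝒞.le_of_hasGain_of_lt_assouadDim heE hK.le ht₀ ht (by have := hw.le i; lia) ?_ hc
    refine ((div_lt_iff₀ hlog).1 hn₀).le.trans ?_
    gcongr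
    have := hw.le i
    lia
  have hstep : ∀ i < I, ∀ c, 𝒞.HasGain e K (w i) c → 𝒞.HasGain e K ((1 + κ) * w i) (c + ε) := by
    intro i hi c hc
    have hκ₁ : 1 ≤ κ := Nat.one_le_iff_ne_zero.2 fun h => by norm_num [h] at hκ
    have hcR := hgain_le hc
    have hflip (σ) := hsep ⟨i, hi⟩ σ _ (he σ) _ (he _)
    have hle := hw.le i
    obtain ⟨N, hN⟩ := hw.dvd i
    rw [mul_comm] at hN
    simp only [hN] at hc hflip hle ⊢
    exact 𝒞.hasGain_step heE (involutive_flip ⟨i, hi⟩).toPerm hK (by positivity)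
      (hcov.branchingBound_dyadic hC'.le) hm
      (Nat.le_of_mul_le_mul_right (by lia : 2 * m ≤ N * m) hm₀) hκ₁ (fun σ => (hflip σ).1)
      (fun σ => (hflip σ).2) hcR (hnum N (by lia)) hc
  have hfinal := hgain_le (𝒞.hasGain_of_scaleSequence heE hw (by lia)
    (𝒞.hasGain_trivial e hK.le (w 0)) hstep)
  linarith [(div_lt_iff₀ hε).1 hI]

theorem CellSystem.two_mul_assouadDim_le (𝒞 : CellSystem E F d) (hd : 0 ≤ d) (hE : 0 < dimH E) :
    2 * assouadDim F ≤ d := by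
  by_contra! hlt
  obtain ⟨τ, hτ₀, hτ⟩ := ENNReal.lt_iff_exists_nnreal_btwn.1 hE
  have hμ : μH[(τ : ℝ)] E ≠ 0 := by
    rw [hausdorffMeasure_of_lt_dimH hτ]
    exact ENNReal.top_ne_zero
  have hτ₀ : (0 : ℝ) < τ := by exact_mod_cast hτ₀
  obtain ⟨κ, hκ⟩ := exists_nat_gt (1 / (τ : ℝ))
  set δ := (2 * assouadDim F - d) / (4 + 4 * κ)
  have hδ₀ : 0 < δ := div_pos (sub_pos.2 hlt) (by positivity)
  have hδκ : δ * (4 + 4 * κ) = 2 * assouadDim F - d := div_mul_cancel₀ _ (by positivity)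
  have hκδ : 0 ≤ δ * κ := by positivity
  have hle := 𝒞.two_mul_sub_le hd hμ ((div_lt_iff₀ hτ₀).1 hκ)
    (t := assouadDim F - δ) (t' := assouadDim F + δ) (by linarith) (by linarith) (by linarith)
  linarith

theorem min_le_assouadDim_of_forall_abs_le {B : ℝ} (hE : 0 < dimH E) (hB : ∀ e ∈ E, |e| ≤ B) :
    min (2 * assouadDim F) 1 ≤ assouadDim (E * F + F) := by
  by_contra! hlt
  obtain ⟨d, hd, hd'⟩ := exists_between hlt
  obtain ⟨hd₂, hd₁⟩ := lt_min_iff.1 hd'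
  obtain ⟨C, hC, hS⟩ := exists_coverBound_of_assouadDim_lt hd
  have 𝒞 := CellSystem.ofCoverBound hS hC hd₁ (le_max_right B 0)
    fun e he => (hB e he).trans (le_max_left _ _)
  exact hd₂.not_ge (𝒞.two_mul_assouadDim_le ((assouadDim_nonneg _).trans hd.le) hE)

theorem assouad_sum_product_general {E : Set ℝ} (F : Set ℝ) (hE : 0 < dimH E) :
    min (2 * assouadDim F) 1 ≤ assouadDim (E * F + F) := by
  have hcover : ⋃ k : ℕ, E ∩ closedBall 0 k = E := by
    rw [← inter_iUnion, iUnion_closedBall_nat, inter_univ]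
  rw [← hcover, dimH_iUnion, lt_iSup_iff] at hE
  obtain ⟨k, hk⟩ := hE
  refine (min_le_assouadDim_of_forall_abs_le (B := k) hk fun e he => ?_).trans
    (assouadDim_mono (add_subset_add_right (mul_subset_mul_right inter_subset_left)))
  simpa using he.2

end Conclusion

/-- **Theorem 3.10** (sum-product, first part): for non-empty bounded `F ⊆ ℝ` with
`dim_H F > 0`, `dim_A (FF + F) ≥ min{2 dim_A F, 1}`. -/
theorem assouad_sum_product (F : Set ℝ) (hne : F.Nonempty) (hbd : Bornology.IsBounded F)
    (hH : 0 < dimH F) :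
    min (2 * assouadDim F) 1 ≤
      assouadDim {w : ℝ | ∃ x ∈ F, ∃ y ∈ F, ∃ z ∈ F, w = x * y + z} := by
  convert assouad_sum_product_general F hH using 2
  ext w
  simp [Set.mem_add, Set.mem_mul, and_assoc, eq_comm]

end
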